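/- arXiv:2203.17029 — 6 statements merged into one kernel-verified Lean document; each statement's English description precedes it below -/
import Mathlib

section
/- Let q ∈ ℂ with 0 < |q| < 1 and let t, λ, μ ∈ ℂ∖{0} satisfy λ ∉ q^ℤ, μ ∉ q^ℤ, λt ∉ q^ℤ and μt ∉ q^ℤ. Then AL(t,λ,q) − AL(t,μ,q) = − (q;q)_∞³ · θ(λ^{−1}μ;q) · θ(λ^{−1}μ^{−1}t^{−1};q) / ( θ(λ^{−1};q) · θ(μ;q) · θ(λ^{−1}t^{−1};q) · θ(μ^{−1}t^{−1};q) ). -/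
open Finset Filter

/-- Finite q-Pochhammer symbol `(x;q)_k = ∏_{j=0}^{k-1} (1 - x q^j)`. -/
noncomputable def qPoch (x q : ℂ) (k : ℕ) : ℂ := ∏ j ∈ Finset.range k, (1 - x * q ^ j)

/-- Infinite q-Pochhammer symbol `(x;q)_∞ = ∏_{j=0}^{∞} (1 - x q^j)`. -/
noncomputable def qPochInf (x q : ℂ) : ℂ := ∏' j : ℕ, (1 - x * q ^ j)

/-- The Jacobi theta function `θ(t;q) = Σ_{k∈ℤ} (−1)^k q^{k(k+1)/2} t^k`. -/
noncomputable def jtheta (t q : ℂ) : ℂ :=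
  ∑' k : ℤ, (-1 : ℂ) ^ k * q ^ (k * (k + 1) / 2) * t ^ k

/-- The derivative `θ'(t;q) = Σ_{k∈ℤ} (−1)^k k q^{k(k+1)/2} t^k` (with respect to t d/dt). -/
noncomputable def jthetaD (t q : ℂ) : ℂ :=
  ∑' k : ℤ, (-1 : ℂ) ^ k * (k : ℂ) * q ^ (k * (k + 1) / 2) * t ^ k

/-- The Eisenstein-type series `E₁(q) = 1 − 4 Σ_{j=1}^∞ q^j/(1−q^j)`. -/
noncomputable def E1 (q : ℂ) : ℂ := 1 - 4 * ∑' j : ℕ, q ^ (j + 1) / (1 - q ^ (j + 1))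

/-- The Appell-Lerch sum
`AL(t,λ,q) = θ(λ;q)⁻¹ Σ_{ℓ∈ℤ} (−1)^ℓ q^{ℓ(ℓ+1)/2} λ^ℓ / (1 − λ t q^ℓ)`. -/
noncomputable def AL (t lam q : ℂ) : ℂ :=
  (jtheta lam q)⁻¹ *
    ∑' k : ℤ, (-1 : ℂ) ^ k * q ^ (k * (k + 1) / 2) * lam ^ k / (1 - lam * t * q ^ k)

/-- The solution `g^{(0,0)}(t,q) = Σ_{k≥0} (−1)^k q^{k(k+1)/2} (q;q)_k^{−2} t^{−1−k}`. -/
noncomputable def g00 (t q : ℂ) : ℂ :=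
  ∑' k : ℕ, (-1 : ℂ) ^ k * q ^ (k * (k + 1) / 2) / (qPoch q q k) ^ 2 * t ^ (-1 - (k : ℤ))

/-- The solution `g^{(0,1)}(t,q)`. -/
noncomputable def g01 (t q : ℂ) : ℂ :=
  ∑' k : ℕ,
    (E1 q / 2 - 1 / 2 - jthetaD t⁻¹ q / jtheta t⁻¹ q +
        ∑ j ∈ Finset.range k, (1 + q ^ (j + 1)) / (1 - q ^ (j + 1))) *
      ((-1 : ℂ) ^ k * q ^ (k * (k + 1) / 2) / (qPoch q q k) ^ 2 * t ^ (-1 - (k : ℤ)))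


namespace ALaux

/-- The coefficient `(−1)^k q^{k(k+1)/2}` of the theta series. -/
noncomputable def ec (q : ℂ) (k : ℤ) : ℂ := (-1 : ℂ) ^ k * q ^ (k * (k + 1) / 2)

lemma tri_add (k j : ℤ) : (k + j) * (k + j + 1) / 2 = k * (k + 1) / 2 + j * (j + 1) / 2 + k * j := by
  obtain ⟨a, ha⟩ := Int.even_mul_succ_self k
  obtain ⟨b, hb⟩ := Int.even_mul_succ_self j
  have : (k + j) * (k + j + 1) = 2 * (a + b + k * j) := by linear_combination ha + hb
  rw [this, ha, hb]
  omega

lemma ec_add {q : ℂ} (hq : q ≠ 0) (k j : ℤ) : ec q (k + j) = ec q k * ec q j * q ^ (k * j) := by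
  unfold ec
  rw [tri_add, zpow_add₀ hq, zpow_add₀ hq, zpow_add₀ (by norm_num)]
  ring

lemma ec_zero (q : ℂ) : ec q 0 = 1 := by simp [ec]

lemma ec_one (q : ℂ) : ec q 1 = -q := by simp [ec]

lemma ec_succ {q : ℂ} (hq : q ≠ 0) (k : ℤ) : ec q (k + 1) = -q ^ (k + 1) * ec q k := by
  rw [ec_add hq, ec_one, zpow_add₀ hq]; simp; ring

lemma ec_refl (q : ℂ) (k : ℤ) : ec q (-1 - k) = - ec q k := by
  unfold ec
  have : (-1 - k) * (-1 - k + 1) = k * (k + 1) := by ring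
  rw [this, show (-1 - k : ℤ) = -(k + 1) by ring, zpow_neg, zpow_add₀ (by norm_num)]
  rcases Int.even_or_odd k with h | h
  · simp [h.neg_one_zpow]
  · simp [h.neg_one_zpow]

lemma ec_sq {q : ℂ} (hq : q ≠ 0) (k : ℤ) : ec q k * ec q k = q ^ (k * k + k) := by
  unfold ec
  obtain ⟨a, ha⟩ := Int.even_mul_succ_self k
  have h1 : k * (k + 1) / 2 = a := by omega
  have h2 : k * k + k = a + a := by linarith
  rw [h1, h2, zpow_add₀ hq]
  have : (-1 : ℂ) ^ k * (-1) ^ k = 1 := by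
    rcases Int.even_or_odd k with h | h <;> simp [h.neg_one_zpow]
  linear_combination q ^ a * q ^ a * this

lemma ec_ne {q : ℂ} (hq : q ≠ 0) (k : ℤ) : ec q k ≠ 0 := by
  unfold ec
  exact mul_ne_zero (zpow_ne_zero _ (by norm_num)) (zpow_ne_zero _ hq)

lemma summable_ec_nat {q : ℂ} (hq : q ≠ 0) (hq1 : ‖q‖ < 1) {x : ℂ} (hx : x ≠ 0) :
    Summable (fun n : ℕ => ec q n * x ^ (n : ℤ)) := by
  apply summable_of_ratio_test_tendsto_lt_one (l := 0) (by norm_num)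
  · exact Filter.Eventually.of_forall fun n => mul_ne_zero (ec_ne hq _) (zpow_ne_zero _ hx)
  · have : ∀ n : ℕ, ‖ec q ((n + 1 : ℕ) : ℤ) * x ^ ((n + 1 : ℕ) : ℤ)‖ / ‖ec q n * x ^ (n : ℤ)‖
        = ‖q‖ ^ n * (‖q‖ * ‖x‖) := by
      intro n
      have h1 := norm_ne_zero_iff.mpr (ec_ne hq n)
      have h2 := norm_ne_zero_iff.mpr hx
      push_cast
      rw [ec_succ hq, zpow_add_one₀ hx, zpow_add_one₀ hq]
      simp only [norm_mul, norm_neg, zpow_natCast, norm_pow]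
      field_simp
    simp_rw [this]
    simpa using (tendsto_pow_atTop_nhds_zero_of_lt_one (norm_nonneg q) hq1).mul_const (‖q‖ * ‖x‖)

lemma summable_ec {q : ℂ} (hq : q ≠ 0) (hq1 : ‖q‖ < 1) {x : ℂ} (hx : x ≠ 0) :
    Summable (fun n : ℤ => ec q n * x ^ n) := by
  apply Summable.of_nat_of_neg_add_one
  · exact summable_ec_nat hq hq1 hx
  · have := (summable_ec_nat hq hq1 (inv_ne_zero hx)).mul_left (-x⁻¹)
    refine this.congr fun n => ?_
    rw [show (-((n : ℤ) + 1)) = -1 - n by ring, ec_refl, zpow_sub₀ hx]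
    simp
    ring

lemma jtheta_eq (x q : ℂ) : jtheta x q = ∑' k : ℤ, ec q k * x ^ k := rfl

lemma jtheta_shift {q : ℂ} (hq : q ≠ 0) {x : ℂ} (hx : x ≠ 0) (k : ℤ) :
    ec q k * x ^ k * jtheta (x * q ^ k) q = jtheta x q := by
  rw [jtheta_eq, jtheta_eq, ← tsum_mul_left, ← (Equiv.addLeft k).tsum_eq (fun n => ec q n * x ^ n)]
  congr 1; ext n
  rw [Equiv.coe_addLeft, ec_add hq, zpow_add₀ hx, mul_zpow, zpow_mul]
  ring

lemma jtheta_inv {q : ℂ} {x : ℂ} (hx : x ≠ 0) :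
    jtheta x⁻¹ q = - x * jtheta x q := by
  rw [jtheta_eq, jtheta_eq, ← tsum_mul_left, ← (Equiv.subLeft (-1 : ℤ)).tsum_eq]
  congr 1; ext n
  rw [Equiv.subLeft_apply, ec_refl, zpow_sub₀ (inv_ne_zero hx)]
  simp
  ring

lemma jtheta_one (q : ℂ) : jtheta 1 q = 0 := by
  have := jtheta_inv (q := q) (x := 1) one_ne_zero
  simp at this
  linear_combination this / 2

lemma jtheta_zpow {q : ℂ} (hq : q ≠ 0) (k : ℤ) : jtheta (q ^ k) q = 0 := by
  have := jtheta_shift hq one_ne_zero k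
  rw [jtheta_one, one_mul, one_zpow, mul_one] at this
  exact (mul_eq_zero.mp this).resolve_left (ec_ne hq k)

/-- The coefficients of `θ(x)/(1-x)`. -/
noncomputable def cc (q : ℂ) (n : ℤ) : ℂ := - ∑' m : ℕ, ec q (n + 1 + m)

lemma summable_ec_shift {q : ℂ} (hq : q ≠ 0) (hq1 : ‖q‖ < 1) (n : ℤ) :
    Summable (fun m : ℕ => ec q (n + m)) := by
  have h := summable_ec hq hq1 one_ne_zero
  simp only [one_zpow, mul_one] at h
  exact h.comp_injective (i := fun m : ℕ => n + (m : ℤ)) (fun a b hab => by simpa using hab)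

lemma cc_rec {q : ℂ} (hq : q ≠ 0) (hq1 : ‖q‖ < 1) (n : ℤ) : cc q (n + 1) - cc q n = ec q (n + 1) := by
  unfold cc
  rw [(summable_ec_shift hq hq1 (n + 1)).tsum_eq_zero_add]
  have : ∀ m : ℕ, ec q (n + 1 + 1 + m) = ec q (n + 1 + (m + 1 : ℕ)) := by
    intro m; congr 1; push_cast; ring
  simp only [this]
  simp

lemma cc_refl {q : ℂ} (hq : q ≠ 0) (hq1 : ‖q‖ < 1) (n : ℤ) : cc q (-2 - n) = cc q n := by
  have hstep : ∀ n : ℤ, cc q (-2 - (n + 1)) - cc q (n + 1) = cc q (-2 - n) - cc q n := by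
    intro n
    have h1 := cc_rec hq hq1 n
    have h2 := cc_rec hq hq1 (-2 - (n + 1))
    have h3 := ec_refl q (n + 1)
    rw [show (-2 - (n + 1) + 1 : ℤ) = -2 - n by ring] at h2
    rw [show (-1 - (n + 1) : ℤ) = -2 - n by ring] at h3
    linear_combination -h1 - h2 - h3
  have key : ∀ n : ℤ, cc q (-2 - n) - cc q n = 0 := by
    intro n
    refine Int.inductionOn' (motive := fun n => cc q (-2 - n) - cc q n = 0) n (-1) (by norm_num)
      (fun k _ ih => by rw [hstep]; exact ih) (fun k _ ih => ?_)
    have := hstep (k - 1)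
    rw [sub_add_cancel] at this
    rw [← this]; exact ih
  exact sub_eq_zero.mp (key n)

lemma cc_bound {q : ℂ} (hq : q ≠ 0) (hq1 : ‖q‖ < 1) :
    ∃ S : ℝ, 0 ≤ S ∧ ∀ n : ℤ, ‖cc q n‖ ≤ S * (‖ec q n‖ + ‖ec q (n + 1)‖) := by
  have hs : Summable (fun m : ℕ => ‖ec q m‖) := by
    simpa using (summable_ec_shift hq hq1 0).norm
  set S := ∑' m : ℕ, ‖ec q m‖ with hS
  have hS0 : 0 ≤ S := tsum_nonneg fun _ => norm_nonneg _
  have h1 : ∀ n : ℤ, -1 ≤ n → ‖cc q n‖ ≤ S * ‖ec q (n + 1)‖ := by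
    intro n hn
    unfold cc
    rw [norm_neg]
    refine tsum_of_norm_bounded (hs.hasSum.mul_right _) fun m => ?_
    rw [ec_add hq, norm_mul, norm_mul, norm_zpow]
    have : ‖q‖ ^ ((n + 1) * (m : ℤ)) ≤ 1 := by
      have h0 : 0 ≤ (n + 1) * (m : ℤ) := mul_nonneg (by omega) (by omega)
      obtain ⟨p, hp⟩ := Int.eq_ofNat_of_zero_le h0
      rw [hp, zpow_natCast]
      exact pow_le_one₀ (norm_nonneg _) hq1.le
    calc _ ≤ ‖ec q (n + 1)‖ * ‖ec q m‖ * 1 := by gcongr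
      _ = _ := by ring
  refine ⟨S, hS0, fun n => ?_⟩
  rcases le_total (-1) n with h | h
  · refine (h1 n h).trans ?_
    gcongr
    have := norm_nonneg (ec q n); linarith
  · rw [← cc_refl hq hq1]
    refine (h1 (-2 - n) (by omega)).trans ?_
    rw [show (-2 - n + 1 : ℤ) = -1 - n by ring, ec_refl, norm_neg]
    gcongr
    have := norm_nonneg (ec q (n + 1)); linarith

lemma summable_cc {q : ℂ} (hq : q ≠ 0) (hq1 : ‖q‖ < 1) {x : ℂ} (hx : x ≠ 0) :
    Summable (fun n : ℤ => cc q n * x ^ n) := by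
  obtain ⟨S, hS, hb⟩ := cc_bound hq hq1
  have h1 := (summable_ec hq hq1 hx).norm
  have h2 := ((Equiv.addRight (1 : ℤ)).summable_iff.mpr h1).mul_right (‖x‖⁻¹)
  refine Summable.of_norm_bounded ((h1.add h2).mul_left S) fun n => ?_
  have hx' := norm_ne_zero_iff.mpr hx
  have : S * (‖ec q n * x ^ n‖ + ((fun n : ℤ => ‖ec q n * x ^ n‖) ∘ (Equiv.addRight (1 : ℤ))) n * ‖x‖⁻¹)
      = S * (‖ec q n‖ + ‖ec q (n + 1)‖) * ‖x‖ ^ n := by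
    simp only [Function.comp, Equiv.coe_addRight, norm_mul, norm_zpow, zpow_add_one₀ hx']
    field_simp
  rw [this, norm_mul, norm_zpow]
  gcongr
  exact hb n

/-- The function `θ(x)/(1-x)`. -/
noncomputable def Cf (q x : ℂ) : ℂ := ∑' n : ℤ, cc q n * x ^ n

lemma Cf_mul {q : ℂ} (hq : q ≠ 0) (hq1 : ‖q‖ < 1) {x : ℂ} (hx : x ≠ 0) :
    (1 - x) * Cf q x = jtheta x q := by
  have hs := summable_cc hq hq1 hx
  have h1 : x * Cf q x = ∑' n : ℤ, cc q (n - 1) * x ^ n := by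
    unfold Cf
    rw [← tsum_mul_left, ← (Equiv.addRight (1 : ℤ)).tsum_eq (fun n => cc q (n - 1) * x ^ n)]
    congr 1; ext n
    simp only [Equiv.coe_addRight, zpow_add_one₀ hx, add_sub_cancel_right]
    ring
  have hs2 : Summable (fun n : ℤ => cc q (n - 1) * x ^ n) := by
    rw [← (Equiv.addRight (1 : ℤ)).summable_iff]
    refine (hs.mul_left x).congr fun n => ?_
    simp only [Function.comp, Equiv.coe_addRight, zpow_add_one₀ hx, add_sub_cancel_right]
    ring
  rw [sub_mul, one_mul, h1, Cf, ← hs.tsum_sub hs2, jtheta_eq]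
  congr 1; ext n
  have := cc_rec hq hq1 (n - 1)
  rw [sub_add_cancel] at this
  rw [← this]; ring

lemma Cf_continuousAt {q : ℂ} (hq : q ≠ 0) (hq1 : ‖q‖ < 1) : ContinuousAt (Cf q) 1 := by
  have hc : ContinuousOn (Cf q) {x : ℂ | 1/2 < ‖x‖ ∧ ‖x‖ < 2} := by
    unfold Cf
    have h1 := (summable_cc hq hq1 (x := 2) (by norm_num)).norm
    have h2 := (summable_cc hq hq1 (x := 1/2) (by norm_num)).norm
    refine continuousOn_tsum (u := fun n : ℤ => ‖cc q n * 2 ^ n‖ + ‖cc q n * (1/2) ^ n‖) ?_ (h1.add h2) ?_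
    · intro n x hx
      have : x ≠ 0 := by
        rintro rfl
        have := hx.1
        rw [norm_zero] at this; linarith
      exact (continuousAt_const.mul (continuousAt_zpow₀ _ _ (Or.inl this))).continuousWithinAt
    · intro n x hx
      obtain ⟨ha, hb⟩ := hx
      simp only [norm_mul, norm_zpow, ← mul_add]
      gcongr
      norm_num
      rcases le_total 0 n with h | h
      · obtain ⟨p, rfl⟩ := Int.eq_ofNat_of_zero_le h
        simp only [zpow_natCast]
        have h3 : ‖x‖ ^ p ≤ 2 ^ p := by gcongr
        have h4 : 0 ≤ (1 / 2 : ℝ) ^ p := by positivity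
        linarith
      · obtain ⟨p, hp⟩ := Int.eq_ofNat_of_zero_le (neg_nonneg.mpr h)
        obtain rfl : n = -(p : ℤ) := by omega
        simp only [zpow_neg, zpow_natCast]
        have h3 : (‖x‖ ^ p)⁻¹ ≤ ((1/2) ^ p)⁻¹ := by gcongr
        have h4 : 0 ≤ ((2 : ℝ) ^ p)⁻¹ := by positivity
        linarith
  refine hc.continuousAt (IsOpen.mem_nhds ?_ (by norm_num))
  exact (isOpen_lt continuous_const continuous_norm).inter (isOpen_lt continuous_norm continuous_const)

end ALaux

namespace ALaux

lemma summable_qgeom {q : ℂ} (hq1 : ‖q‖ < 1) (x : ℂ) : Summable (fun j : ℕ => ‖-(x * q ^ j)‖) := by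
  simp only [norm_neg, norm_mul, norm_pow]
  exact (summable_geometric_of_lt_one (norm_nonneg _) hq1).mul_left _

lemma qPochInf_tendsto {q : ℂ} (hq1 : ‖q‖ < 1) (x : ℂ) :
    Tendsto (fun n => qPoch x q n) atTop (nhds (qPochInf x q)) := by
  have := (multipliable_one_add_of_summable (summable_qgeom hq1 x)).hasProd.tendsto_prod_nat
  simp only [← sub_eq_add_neg] at this
  exact this

lemma qPochInf_ne {q : ℂ} (hq1 : ‖q‖ < 1) {x : ℂ} (hx : ∀ j : ℕ, x * q ^ j ≠ 1) :
    qPochInf x q ≠ 0 := by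
  have := tprod_one_add_ne_zero_of_summable (f := fun j : ℕ => -(x * q ^ j))
    (fun j => by rw [← sub_eq_add_neg]; exact sub_ne_zero.mpr (hx j).symm) (summable_qgeom hq1 x)
  simp only [← sub_eq_add_neg] at this
  exact this

lemma qPochInf_succ {q : ℂ} (hq1 : ‖q‖ < 1) (x : ℂ) :
    qPochInf x q = (1 - x) * qPochInf (q * x) q := by
  refine tendsto_nhds_unique ((tendsto_add_atTop_iff_nat 1).mpr (qPochInf_tendsto hq1 x)) ?_
  refine ((qPochInf_tendsto hq1 (q * x)).const_mul (1 - x)).congr fun n => ?_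
  unfold qPoch
  rw [prod_range_succ']
  simp only [pow_zero, mul_one]
  rw [mul_comm]
  congr 1
  exact prod_congr rfl fun j _ => by ring

lemma qPochInf_continuous {q : ℂ} (hq1 : ‖q‖ < 1) : Continuous (fun x => qPochInf x q) := by
  rw [continuous_iff_continuousAt]
  intro x0
  have hu : Summable (fun j : ℕ => (‖x0‖ + 1) * ‖q‖ ^ j) :=
    (summable_geometric_of_lt_one (norm_nonneg _) hq1).mul_left _
  have h := Summable.hasProdLocallyUniformlyOn_nat_one_add (f := fun (j : ℕ) (x : ℂ) => -(x * q ^ j))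
    (Metric.isOpen_ball (x := x0) (ε := 1)) hu
    (Filter.Eventually.of_forall fun n x hx => by
      rw [norm_neg, norm_mul, norm_pow]
      gcongr
      rw [Metric.mem_ball, dist_eq_norm] at hx
      have := norm_sub_norm_le x x0
      linarith) (fun n => by fun_prop)
  have h2 := (hasProdLocallyUniformlyOn_iff_tendstoLocallyUniformlyOn.mp h).continuousOn
    (Filter.Eventually.of_forall fun s => by fun_prop).frequently
  have h3 := h2.continuousAt (Metric.ball_mem_nhds x0 one_pos)
  simp only [← sub_eq_add_neg] at h3
  exact h3

lemma q_pow_ne_one {q : ℂ} (hq1 : ‖q‖ < 1) (j : ℕ) : q * q ^ j ≠ 1 := by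
  intro h
  have h1 := congrArg norm h
  rw [← pow_succ', norm_pow, norm_one] at h1
  exact absurd h1 (pow_lt_one₀ (norm_nonneg _) hq1 (by omega)).ne

lemma qPoch_ne {q : ℂ} (hq1 : ‖q‖ < 1) (n : ℕ) : qPoch q q n ≠ 0 :=
  prod_ne_zero_iff.mpr fun j _ => sub_ne_zero.mpr (q_pow_ne_one hq1 j).symm

/-- `1/(q;q)_m`, extended by zero to negative `m`. -/
noncomputable def iP (q : ℂ) (m : ℤ) : ℂ := if m < 0 then 0 else (qPoch q q m.toNat)⁻¹

lemma iP_rec {q : ℂ} (hq1 : ‖q‖ < 1) (m : ℤ) : iP q m = (1 - q ^ (m + 1)) * iP q (m + 1) := by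
  unfold iP
  rcases lt_trichotomy m (-1) with h | h | h
  · rw [if_pos (by omega), if_pos (by omega), mul_zero]
  · subst h; simp
  · obtain ⟨p, rfl⟩ := Int.eq_ofNat_of_zero_le (show 0 ≤ m by omega)
    rw [if_neg (by omega), if_neg (by omega)]
    have h1 : ((p : ℤ) + 1).toNat = p + 1 := by omega
    have h2 : qPoch q q (p + 1) = qPoch q q p * (1 - q * q ^ p) := by
      unfold qPoch; rw [prod_range_succ]
    have h3 := qPoch_ne hq1 p
    have h4 : (1 - q * q ^ p) ≠ 0 := sub_ne_zero.mpr (q_pow_ne_one hq1 p).symm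
    have h5 : q ^ ((p : ℤ) + 1) = q * q ^ p := by
      rw [← pow_succ']; exact_mod_cast zpow_natCast q (p + 1)
    rw [h1, h2, h5, Int.toNat_natCast]
    field_simp

/-- Central q-binomial coefficients. -/
noncomputable def Wc (q : ℂ) (n : ℕ) (k : ℤ) : ℂ := qPoch q q (2 * n) * iP q (n - k) * iP q (n + k)

lemma Wc_rec {q : ℂ} (hq : q ≠ 0) (hq1 : ‖q‖ < 1) (n : ℕ) (k : ℤ) :
    Wc q (n + 1) k = (1 + q ^ (2 * n + 1)) * Wc q n k + q ^ ((n : ℤ) + 1 - k) * Wc q n (k - 1)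
      + q ^ ((n : ℤ) + 1 + k) * Wc q n (k + 1) := by
  unfold Wc
  have e1 := iP_rec hq1 (n - k)
  have e2 := iP_rec hq1 (n - k - 1)
  have e3 := iP_rec hq1 (n + k)
  have e4 := iP_rec hq1 (n + k - 1)
  rw [sub_add_cancel] at e2 e4
  have hP : qPoch q q (2 * (n + 1)) = qPoch q q (2 * n) * (1 - q * q ^ (2 * n)) * (1 - q * q ^ (2 * n + 1)) := by
    unfold qPoch; rw [show 2 * (n + 1) = 2 * n + 1 + 1 by ring, prod_range_succ, prod_range_succ]
  set u := q ^ ((n : ℤ) + 1 - k) with hu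
  set v := q ^ ((n : ℤ) + 1 + k) with hv
  have huv : u * v = q * q ^ (2 * n + 1) := by
    rw [hu, hv, ← zpow_add₀ hq, ← pow_succ', ← zpow_natCast]; congr 1; push_cast; ring
  have hu' : u = q * q ^ ((n : ℤ) - k) := by
    rw [hu, ← zpow_one_add₀ hq]; congr 1; ring
  have hv' : v = q * q ^ ((n : ℤ) + k) := by
    rw [hv, ← zpow_one_add₀ hq]; congr 1; ring
  rw [show (n : ℤ) - k + 1 = n + 1 - k by ring, ← hu] at e1
  rw [show (n : ℤ) + k + 1 = n + 1 + k by ring, ← hv] at e3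
  rw [show (n : ℤ) - (k - 1) = n + 1 - k by ring, show (n : ℤ) + (k - 1) = n + k - 1 by ring,
    show (n : ℤ) - (k + 1) = n - k - 1 by ring, show (n : ℤ) + (k + 1) = n + 1 + k by ring,
    e2, e4, e1, e3, hP]
  push_cast
  generalize iP q ((n : ℤ) + 1 - k) = I
  generalize iP q ((n : ℤ) + 1 + k) = J
  generalize qPoch q q (2 * n) = P
  generalize q ^ ((n : ℤ) - k) = a at *
  generalize q ^ ((n : ℤ) + k) = b at *
  rw [← huv]
  have h2 : q * q ^ (2 * n) = q * (a * b) := by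
    apply mul_left_cancel₀ hq
    rw [← pow_succ', ← huv, hu', hv']; ring
  have h3 : q ^ (2 * n + 1) = q * (a * b) := by rw [pow_succ', h2]
  rw [h2, h3, hu', hv']
  ring

lemma finite_jtp {q : ℂ} (hq : q ≠ 0) (hq1 : ‖q‖ < 1) {x : ℂ} (hx : x ≠ 0) (n : ℕ) :
    HasSum (fun k : ℤ => Wc q n k * (ec q k * x ^ k)) (qPoch (q * x) q n * qPoch x⁻¹ q n) := by
  induction n with
  | zero =>
    have : (qPoch (q * x) q 0 * qPoch x⁻¹ q 0) = Wc q 0 0 * (ec q 0 * x ^ (0 : ℤ)) := by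
      simp [qPoch, Wc, iP, ec_zero]
    rw [this]
    refine hasSum_single 0 fun k hk => ?_
    have : iP q (-k) * iP q k = 0 := by
      unfold iP
      rcases lt_or_gt_of_ne hk with h | h
      · simp [h]
      · simp [h]
    simp only [Wc]
    push_cast
    rw [zero_sub, zero_add, mul_assoc (qPoch _ _ _), this]; ring
  | succ n ih =>
    have e1 : qPoch (q * x) q (n + 1) * qPoch x⁻¹ q (n + 1) =
        (1 + q ^ (2 * n + 1)) * (qPoch (q * x) q n * qPoch x⁻¹ q n)
        + (-(q ^ (n + 1) * x)) * (qPoch (q * x) q n * qPoch x⁻¹ q n)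
        + (-(q ^ n * x⁻¹)) * (qPoch (q * x) q n * qPoch x⁻¹ q n) := by
      have a1 : qPoch (q * x) q (n + 1) = qPoch (q * x) q n * (1 - q * x * q ^ n) := by
        unfold qPoch; rw [prod_range_succ]
      have a2 : qPoch x⁻¹ q (n + 1) = qPoch x⁻¹ q n * (1 - x⁻¹ * q ^ n) := by
        unfold qPoch; rw [prod_range_succ]
      rw [a1, a2]
      field_simp
      ring
    rw [e1]
    have s1 := (Equiv.subRight (1 : ℤ)).hasSum_iff.mpr ih
    have s2 := (Equiv.addRight (1 : ℤ)).hasSum_iff.mpr ih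
    have s3 := (((ih.mul_left (1 + q ^ (2 * n + 1))).add (s1.mul_left (-(q ^ (n + 1) * x)))).add
      (s2.mul_left (-(q ^ n * x⁻¹))))
    convert! s3 using 1
    ext k
    simp only [Function.comp, Equiv.coe_addRight, Equiv.subRight_apply]
    have b1 := ec_succ hq (k - 1)
    rw [sub_add_cancel] at b1
    rw [Wc_rec hq hq1, ec_succ hq k, b1, zpow_add_one₀ hx, zpow_sub_one₀ hx, zpow_sub₀ hq,
      zpow_add₀ hq (n + 1 : ℤ) k, zpow_add_one₀ hq k, zpow_add_one₀ hq (n : ℤ), zpow_natCast]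
    have hqk : q ^ k ≠ 0 := zpow_ne_zero _ hq
    field_simp
    ring

lemma jtp {q : ℂ} (hq : q ≠ 0) (hq1 : ‖q‖ < 1) {x : ℂ} (hx : x ≠ 0) :
    jtheta x q = qPochInf q q * qPochInf (q * x) q * qPochInf x⁻¹ q := by
  have hP := qPochInf_ne hq1 (q_pow_ne_one hq1)
  have hPt := qPochInf_tendsto hq1 q
  have hPi := hPt.inv₀ hP
  obtain ⟨M, hM⟩ := (Metric.isBounded_range_of_tendsto _ hPt).exists_norm_le
  obtain ⟨M', hM'⟩ := (Metric.isBounded_range_of_tendsto _ hPi).exists_norm_le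
  have hM0 : 0 ≤ M := (norm_nonneg _).trans (hM _ ⟨0, rfl⟩)
  have hM0' : 0 ≤ M' := (norm_nonneg _).trans (hM' _ ⟨0, rfl⟩)
  have hiP : ∀ m, ‖iP q m‖ ≤ M' := by
    intro m
    unfold iP
    split_ifs
    · simpa using hM0'
    · exact hM' _ ⟨_, rfl⟩
  have hlimP : ∀ k : ℤ, Tendsto (fun n : ℕ => iP q (n + k)) atTop (nhds (qPochInf q q)⁻¹) := by
    intro k
    have h1 : Tendsto (fun n : ℕ => ((n : ℤ) + k).toNat) atTop atTop := by
      refine tendsto_atTop.mpr fun b => ?_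
      filter_upwards [eventually_ge_atTop (b + k.natAbs)] with n hn
      omega
    refine (hPi.comp h1).congr' ?_
    filter_upwards [eventually_ge_atTop k.natAbs] with n hn
    simp only [Function.comp, iP]
    rw [if_neg (by omega)]
  have hlim : ∀ k : ℤ, Tendsto (fun n : ℕ => Wc q n k * (ec q k * x ^ k)) atTop
      (nhds ((qPochInf q q)⁻¹ * (ec q k * x ^ k))) := by
    intro k
    have h2 : Tendsto (fun n : ℕ => 2 * n) atTop atTop := tendsto_id.const_mul_atTop' (by norm_num)
    have h3 := (((hPt.comp h2).mul (hlimP (-k))).mul (hlimP k)).mul_const (ec q k * x ^ k)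
    have h4 : qPochInf q q * (qPochInf q q)⁻¹ * (qPochInf q q)⁻¹ = (qPochInf q q)⁻¹ := by
      field_simp
    rw [h4] at h3
    exact h3
  have hT := tendsto_tsum_of_dominated_convergence
    (bound := fun k : ℤ => M * M' * M' * ‖ec q k * x ^ k‖)
    ((summable_ec hq hq1 hx).norm.mul_left _) hlim
    (Filter.Eventually.of_forall fun n k => by
      rw [norm_mul, Wc, norm_mul, norm_mul]
      gcongr
      · exact hM _ ⟨_, rfl⟩
      · exact hiP _
      · exact hiP _)
  have hT2 := (qPochInf_tendsto hq1 (q * x)).mul (qPochInf_tendsto hq1 x⁻¹)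
  have heq : ∀ n : ℕ, ∑' k : ℤ, Wc q n k * (ec q k * x ^ k) = qPoch (q * x) q n * qPoch x⁻¹ q n :=
    fun n => (finite_jtp hq hq1 hx n).tsum_eq
  simp only [heq] at hT
  have := tendsto_nhds_unique hT hT2
  rw [tsum_mul_left, ← jtheta_eq] at this
  rw [mul_assoc, ← this]
  field_simp

lemma jtheta_ne {q : ℂ} (hq : q ≠ 0) (hq1 : ‖q‖ < 1) {x : ℂ} (hx : x ≠ 0)
    (h : ∀ n : ℤ, x ≠ q ^ n) : jtheta x q ≠ 0 := by
  rw [jtp hq hq1 hx]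
  refine mul_ne_zero (mul_ne_zero (qPochInf_ne hq1 (q_pow_ne_one hq1)) (qPochInf_ne hq1 ?_))
    (qPochInf_ne hq1 ?_)
  · intro j hj
    apply h (-(j + 1 : ℕ))
    rw [zpow_neg, zpow_natCast]
    refine eq_inv_of_mul_eq_one_left ?_
    rw [← hj]; ring
  · intro j hj
    apply h j
    rw [zpow_natCast]
    field_simp at hj
    exact hj.symm

lemma Cf_one {q : ℂ} (hq : q ≠ 0) (hq1 : ‖q‖ < 1) : Cf q 1 = - qPochInf q q ^ 3 := by
  have h1 : Tendsto (Cf q) (nhdsWithin 1 {1}ᶜ) (nhds (Cf q 1)) :=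
    (Cf_continuousAt hq hq1).tendsto.mono_left nhdsWithin_le_nhds
  have hc : ContinuousAt (fun x : ℂ => -x⁻¹ * (qPochInf q q * qPochInf (q * x) q * qPochInf (q * x⁻¹) q)) 1 := by
    have hcont := qPochInf_continuous hq1
    have hi : ContinuousAt (fun x : ℂ => x⁻¹) 1 := continuousAt_inv₀ one_ne_zero
    have a1 : ContinuousAt (fun x : ℂ => qPochInf (q * x) q) 1 :=
      (hcont.comp (continuous_const.mul continuous_id)).continuousAt
    have a2 : ContinuousAt (fun x : ℂ => qPochInf (q * x⁻¹) q) 1 :=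
      ContinuousAt.comp (g := fun x => qPochInf x q) (f := fun x : ℂ => q * x⁻¹)
        hcont.continuousAt (continuousAt_const.mul hi)
    exact hi.neg.mul ((continuousAt_const.mul a1).mul a2)
  have h2 := hc.tendsto.mono_left (nhdsWithin_le_nhds (s := {1}ᶜ))
  have h3 := tendsto_nhds_unique h1 (h2.congr' ?_)
  · rw [h3]; simp; ring
  · have hne : ∀ᶠ x : ℂ in nhdsWithin 1 {1}ᶜ, x ≠ 0 :=
      nhdsWithin_le_nhds (isOpen_ne.mem_nhds one_ne_zero)
    filter_upwards [self_mem_nhdsWithin, hne] with x hx1 hx0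
    have hx1 : 1 - x ≠ 0 := sub_ne_zero.mpr (Ne.symm hx1)
    apply mul_left_cancel₀ hx1
    rw [Cf_mul hq hq1 hx0, jtp hq hq1 hx0, qPochInf_succ hq1 x⁻¹]
    field_simp
    ring

end ALaux

namespace ALaux

lemma int_seq_unique {f g r : ℤ → ℂ} (hr : ∀ j, r j ≠ 0) (hf : ∀ j, f (j + 1) = r j * f j)
    (hg : ∀ j, g (j + 1) = r j * g j) (h0 : f 0 = g 0) (j : ℤ) : f j = g j := by
  refine Int.inductionOn' (motive := fun n => f n = g n) j 0 h0
      (fun k _ ih => by rw [hf, hg, ih]) (fun k _ ih => ?_)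
  have h1 := hf (k - 1)
  have h2 := hg (k - 1)
  rw [sub_add_cancel] at h1 h2
  apply mul_left_cancel₀ (hr (k - 1))
  rw [← h1, ← h2, ih]

/-- Basis function with even exponents. -/
noncomputable def Af (q t x : ℂ) : ℂ := ∑' j : ℤ, ec q j * ec q j * t ^ j * x ^ (2 * j)

/-- Basis function with odd exponents. -/
noncomputable def Bf (q t x : ℂ) : ℂ := ∑' j : ℤ, ec q j * ec q j * q ^ j * t ^ j * x ^ (2 * j + 1)

lemma summable_sq {q : ℂ} (hq : q ≠ 0) (hq1 : ‖q‖ < 1) {x : ℂ} (hx : x ≠ 0) :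
    Summable (fun j : ℤ => ec q j * ec q j * x ^ j) := by
  have h1 := (summable_ec hq hq1 hx).norm
  have h2 := (summable_ec hq hq1 one_ne_zero).norm
  have h3 := (h1.mul_of_nonneg h2 (fun _ => norm_nonneg _) (fun _ => norm_nonneg _)).comp_injective
    (i := fun j : ℤ => (j, j)) (fun a b hab => by simpa using hab)
  refine Summable.of_norm (h3.congr fun j => ?_)
  simp only [Function.comp, ← norm_mul]
  congr 1
  simp
  ring

lemma two_dim {q : ℂ} (hq : q ≠ 0) (hq1 : ‖q‖ < 1) {t : ℂ} (ht : t ≠ 0) (v : ℤ → ℤ → ℂ)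
    (hv : ∀ k m, v (k + 1) (m + 1) = q ^ (k + m + 2) * t * v k m) :
    ∃ a b : ℂ, ∀ x : ℂ, x ≠ 0 → Summable (fun p : ℤ × ℤ => v p.1 p.2 * x ^ (p.1 + p.2)) →
      ∑' p : ℤ × ℤ, v p.1 p.2 * x ^ (p.1 + p.2) = a * Af q t x + b * Bf q t x := by
  set a : ℤ → ℂ := fun N => ∑' k : ℤ, v k (N - k) with ha
  have harec : ∀ N, a (N + 2) = q ^ (N + 2) * t * a N := by
    intro N
    simp only [ha]
    rw [← tsum_mul_left, ← (Equiv.addRight (1 : ℤ)).tsum_eq]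
    congr 1; ext k
    rw [Equiv.coe_addRight, show N + 2 - (k + 1) = N - k + 1 by ring, hv]
    congr 3; ring
  have heven : ∀ j : ℤ, a (2 * j) = ec q j * ec q j * t ^ j * a 0 := by
    intro j
    refine int_seq_unique (f := fun j => a (2 * j)) (g := fun j => ec q j * ec q j * t ^ j * a 0)
      (r := fun j => q ^ (2 * j + 2) * t) (fun j => mul_ne_zero (zpow_ne_zero _ hq) ht) ?_ ?_ ?_ j
    · intro j
      rw [show 2 * (j + 1) = 2 * j + 2 by ring, harec]
    · intro j
      rw [ec_succ hq, zpow_add_one₀ ht, show 2 * j + 2 = (j + 1) + (j + 1) by ring, zpow_add₀ hq (j + 1)]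
      ring
    · simp [ec_zero]
  have hodd : ∀ j : ℤ, a (2 * j + 1) = ec q j * ec q j * q ^ j * t ^ j * a 1 := by
    intro j
    refine int_seq_unique (f := fun j => a (2 * j + 1))
      (g := fun j => ec q j * ec q j * q ^ j * t ^ j * a 1)
      (r := fun j => q ^ (2 * j + 1 + 2) * t) (fun j => mul_ne_zero (zpow_ne_zero _ hq) ht) ?_ ?_ ?_ j
    · intro j
      rw [show 2 * (j + 1) + 1 = 2 * j + 1 + 2 by ring, harec]
    · intro j
      rw [ec_succ hq, zpow_add_one₀ ht, show 2 * j + 1 + 2 = (j + 1) + (j + 1) + 1 by ring,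
        zpow_add_one₀ hq (j + 1 + (j + 1)), zpow_add₀ hq (j + 1), zpow_add_one₀ hq j]
      ring
    · simp [ec_zero]
  refine ⟨a 0, a 1, fun x hx hs => ?_⟩
  let e : ℤ × ℤ ≃ ℤ × ℤ :=
    { toFun := fun p => (p.2, p.1 - p.2)
      invFun := fun p => (p.1 + p.2, p.1)
      left_inv := fun p => by ext <;> simp
      right_inv := fun p => by ext <;> simp }
  have hs' : Summable (fun p : ℤ × ℤ => v p.2 (p.1 - p.2) * x ^ p.1) := by
    refine (e.summable_iff.mpr hs).congr fun p => ?_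
    simp [e]
  have h1 : ∑' p : ℤ × ℤ, v p.1 p.2 * x ^ (p.1 + p.2) = ∑' N : ℤ, a N * x ^ N := by
    rw [← e.tsum_eq]
    have : ∀ p : ℤ × ℤ, v (e p).1 (e p).2 * x ^ ((e p).1 + (e p).2) = v p.2 (p.1 - p.2) * x ^ p.1 := by
      intro p; simp [e]
    simp only [this]
    rw [hs'.tsum_prod]
    simp only [ha, ← tsum_mul_right]
  have hsN : Summable (fun N : ℤ => a N * x ^ N) := by
    refine hs'.prod.congr fun N => ?_
    simp only [ha, ← tsum_mul_right]
  rw [h1]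
  have hsA : Summable (fun j : ℤ => ec q j * ec q j * t ^ j * x ^ (2 * j)) := by
    refine (summable_sq hq hq1 (mul_ne_zero ht (pow_ne_zero 2 hx))).congr fun j => ?_
    rw [mul_zpow, zpow_mul, ← zpow_natCast x 2]
    push_cast; ring
  have hsB : Summable (fun j : ℤ => ec q j * ec q j * q ^ j * t ^ j * x ^ (2 * j + 1)) := by
    refine ((summable_sq hq hq1 (mul_ne_zero (mul_ne_zero hq ht) (pow_ne_zero 2 hx))).mul_right x).congr
      fun j => ?_
    rw [mul_zpow, mul_zpow, zpow_add_one₀ hx, zpow_mul, ← zpow_natCast x 2]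
    push_cast; ring
  have h2 : ∑' N : ℤ, a N * x ^ N = ∑' j : ℤ, (a (2 * j) * x ^ (2 * j) + a (2 * j + 1) * x ^ (2 * j + 1)) := by
    rw [← (Int.divModEquiv 2).symm.tsum_eq (fun N : ℤ => a N * x ^ N)]
    refine Eq.trans (((Int.divModEquiv 2).symm.summable_iff.mpr hsN).tsum_prod) ?_
    congr 1; ext j
    rw [tsum_fintype, Fin.sum_univ_two]
    simp [Int.divModEquiv, mul_comm, Function.comp]
  rw [h2]
  simp only [heven, hodd]
  unfold Af Bf
  rw [← tsum_mul_left, ← tsum_mul_left, ← (hsA.mul_left _).tsum_add (hsB.mul_left _)]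
  congr 1; ext j; ring

/-- products of two theta functions lie in the two dimensional space -/
lemma theta_mul {q : ℂ} (hq : q ≠ 0) (hq1 : ‖q‖ < 1) {t : ℂ} (ht : t ≠ 0) (α β : ℂ)
    (hα : α ≠ 0) (hβ : β ≠ 0) (hαβ : α * β = t) :
    ∃ a b : ℂ, ∀ x : ℂ, x ≠ 0 → jtheta (α * x) q * jtheta (β * x) q = a * Af q t x + b * Bf q t x := by
  obtain ⟨a, b, h⟩ := two_dim hq hq1 ht (fun k m => ec q k * α ^ k * (ec q m * β ^ m)) (by
    intro k m
    rw [ec_succ hq, ec_succ hq, zpow_add_one₀ hα, zpow_add_one₀ hβ, ← hαβ,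
      show k + m + 2 = (k + 1) + (m + 1) by ring, zpow_add₀ hq (k + 1)]
    ring)
  refine ⟨a, b, fun x hx => ?_⟩
  have s1 := (summable_ec hq hq1 (mul_ne_zero hα hx)).norm
  have s2 := (summable_ec hq hq1 (mul_ne_zero hβ hx)).norm
  have e : ∀ p : ℤ × ℤ, ec q p.1 * α ^ p.1 * (ec q p.2 * β ^ p.2) * x ^ (p.1 + p.2) =
      ec q p.1 * (α * x) ^ p.1 * (ec q p.2 * (β * x) ^ p.2) := by
    intro p
    rw [zpow_add₀ hx, mul_zpow, mul_zpow]; ring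
  rw [← h x hx ((summable_mul_of_summable_norm s1 s2).congr fun p => (e p).symm)]
  simp only [e]
  rw [jtheta_eq, jtheta_eq, tsum_mul_tsum_of_summable_norm s1 s2]

/-- the numerator of the Appell-Lerch sum -/
noncomputable def Nf (q t x : ℂ) : ℂ := ∑' k : ℤ, ec q k * x ^ k / (1 - x * t * q ^ k)

lemma summable_dbl {q : ℂ} (hq : q ≠ 0) (hq1 : ‖q‖ < 1) {t : ℂ} (ht : t ≠ 0) {x : ℂ} (hx : x ≠ 0) :
    Summable (fun p : ℤ × ℤ =>
      cc q (p.2 - p.1) * q ^ (p.1 + p.1 * p.2) * t ^ p.2 * x ^ (p.1 + p.2)) := by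
  obtain ⟨S, hS, hb⟩ := cc_bound hq hq1
  have hxt := mul_ne_zero hx ht
  have s1 := (summable_ec hq hq1 hx).norm
  have s2 := (summable_ec hq hq1 hxt).norm
  have s3 := (summable_ec hq hq1 (div_ne_zero hx hq)).norm
  have s4 := ((Equiv.addRight (1 : ℤ)).summable_iff.mpr s2).mul_right (‖x * t‖⁻¹)
  have m1 := s1.mul_of_nonneg s2 (fun _ => norm_nonneg _) (fun _ => norm_nonneg _)
  have m2 := s3.mul_of_nonneg s4 (fun _ => norm_nonneg _)
    (fun _ => mul_nonneg (norm_nonneg _) (inv_nonneg.mpr (norm_nonneg _)))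
  refine Summable.of_norm_bounded ((m1.add m2).mul_left S) fun p => ?_
  obtain ⟨k, m⟩ := p
  simp only [Function.comp, Equiv.coe_addRight]
  have hqk : q ^ k ≠ 0 := zpow_ne_zero _ hq
  have hqm : q ^ (k * m) ≠ 0 := zpow_ne_zero _ hq
  have e1 : ec q k * ec q m = ec q (m - k) * q ^ (k + k * m) := by
    have h1 := ec_add hq (m - k) k
    rw [sub_add_cancel] at h1
    rw [h1, show ec q k * (ec q (m - k) * ec q k * q ^ ((m - k) * k)) =
      ec q (m - k) * ((ec q k * ec q k) * q ^ ((m - k) * k)) by ring, ec_sq hq, ← zpow_add₀ hq]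
    congr 2; ring
  have e2 : ec q k * ec q (m + 1) = ec q (m - k + 1) * q ^ (k + k * m) * q ^ k := by
    have h1 := ec_add hq (m - k + 1) k
    rw [show m - k + 1 + k = m + 1 by ring] at h1
    rw [h1, show ec q k * (ec q (m - k + 1) * ec q k * q ^ ((m - k + 1) * k)) =
      ec q (m - k + 1) * ((ec q k * ec q k) * q ^ ((m - k + 1) * k)) by ring, ec_sq hq, ← zpow_add₀ hq,
      mul_assoc, ← zpow_add₀ hq]
    congr 2; ring
  have f1 : ‖ec q k * x ^ k‖ * ‖ec q m * (x * t) ^ m‖ =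
      ‖ec q (m - k)‖ * ‖q ^ (k + k * m) * t ^ m * x ^ (k + m)‖ := by
    rw [← norm_mul, ← norm_mul]
    congr 1
    rw [zpow_add₀ hx, mul_zpow]
    linear_combination x ^ k * x ^ m * t ^ m * e1
  have f2 : ‖ec q k * (x / q) ^ k‖ * (‖ec q (m + 1) * (x * t) ^ (m + 1)‖ * ‖x * t‖⁻¹) =
      ‖ec q (m - k + 1)‖ * ‖q ^ (k + k * m) * t ^ m * x ^ (k + m)‖ := by
    rw [← norm_inv, ← norm_mul, ← norm_mul, ← norm_mul]
    congr 1
    rw [zpow_add₀ hx, zpow_add_one₀ hxt, mul_zpow, div_zpow]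
    field_simp
    linear_combination e2
  rw [f1, f2, ← add_mul, ← mul_assoc, show cc q (m - k) * q ^ (k + k * m) * t ^ m * x ^ (k + m) =
    cc q (m - k) * (q ^ (k + k * m) * t ^ m * x ^ (k + m)) by ring, norm_mul]
  gcongr
  exact hb _

lemma dbl_tsum {q : ℂ} (hq : q ≠ 0) (hq1 : ‖q‖ < 1) {t : ℂ} (ht : t ≠ 0) {x : ℂ} (hx : x ≠ 0) :
    ∑' p : ℤ × ℤ, cc q (p.2 - p.1) * q ^ (p.1 + p.1 * p.2) * t ^ p.2 * x ^ (p.1 + p.2) =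
      ∑' k : ℤ, ec q k * ec q k * (x * t) ^ k * x ^ k * Cf q (x * t * q ^ k) := by
  rw [(summable_dbl hq hq1 ht hx).tsum_prod]
  congr 1; ext k
  unfold Cf
  rw [← tsum_mul_left, ← (Equiv.addRight k).tsum_eq]
  congr 1; ext n
  simp only [Equiv.coe_addRight]
  rw [add_sub_cancel_right, ec_sq hq, mul_zpow, mul_zpow, mul_zpow, ← zpow_mul, zpow_add₀ ht, zpow_add₀ hx,
    zpow_add₀ hx, show k + k * (n + k) = (k * k + k) + k * n by ring, zpow_add₀ hq (k * k + k)]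
  ring

lemma zpow_ne_one' {q : ℂ} (hq : q ≠ 0) (hq1 : ‖q‖ < 1) {k : ℤ} (hk : k ≠ 0) : q ^ k ≠ 1 := by
  intro h
  have h1 := congrArg norm h
  rw [norm_zpow, norm_one] at h1
  have h2 := zpow_right_injective₀ (norm_pos_iff.mpr hq) hq1.ne
  exact hk (h2 (by simpa using h1))

lemma num_mul {q : ℂ} (hq : q ≠ 0) (hq1 : ‖q‖ < 1) {t : ℂ} (ht : t ≠ 0) :
    ∃ a b : ℂ, (∀ x : ℂ, x ≠ 0 → (∀ n : ℤ, x * t ≠ q ^ n) →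
        jtheta (x * t) q * Nf q t x = a * Af q t x + b * Bf q t x) ∧
      Cf q 1 = a * Af q t t⁻¹ + b * Bf q t t⁻¹ := by
  obtain ⟨a, b, h⟩ := two_dim hq hq1 ht (fun k m => cc q (m - k) * q ^ (k + k * m) * t ^ m) (by
    intro k m
    rw [zpow_add_one₀ ht, show k + 1 + (k + 1) * (m + 1) = (k + m + 2) + (k + k * m) by ring,
      zpow_add₀ hq (k + m + 2), show m + 1 - (k + 1) = m - k by ring]
    ring)
  refine ⟨a, b, fun x hx hxt => ?_, ?_⟩
  · rw [← h x hx (summable_dbl hq hq1 ht hx), dbl_tsum hq hq1 ht hx, Nf, ← tsum_mul_left]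
    congr 1; ext k
    have hx' := mul_ne_zero hx ht
    have hqk : q ^ k ≠ 0 := zpow_ne_zero _ hq
    have hne : 1 - x * t * q ^ k ≠ 0 := by
      rw [sub_ne_zero]
      intro h0
      apply hxt (-k)
      rw [zpow_neg]
      exact eq_inv_of_mul_eq_one_left h0.symm
    have h1 := Cf_mul hq hq1 (mul_ne_zero hx' hqk)
    have h2 := jtheta_shift hq hx' k
    rw [← h2, ← h1]
    field_simp
  · rw [← h t⁻¹ (inv_ne_zero ht) (summable_dbl hq hq1 ht (inv_ne_zero ht)),
      dbl_tsum hq hq1 ht (inv_ne_zero ht), tsum_eq_single 0]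
    · simp [ec_zero, ht]
    · intro k hk
      rw [inv_mul_cancel₀ ht, one_mul]
      have h1 := Cf_mul hq hq1 (zpow_ne_zero k hq)
      rw [jtheta_zpow hq] at h1
      rw [(mul_eq_zero.mp h1).resolve_left (sub_ne_zero.mpr (zpow_ne_one' hq hq1 hk).symm), mul_zero]

end ALaux

open ALaux

/-- The difference of two Appell-Lerch sums with different Laplace parameters is
an explicit ratio of theta functions. -/
theorem appell_lerch_difference
    (q : ℂ) (hq0 : 0 < ‖q‖) (hq1 : ‖q‖ < 1)
    (t lam mu : ℂ) (ht : t ≠ 0) (hlam : lam ≠ 0) (hmu : mu ≠ 0)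
    (hlamq : ∀ n : ℤ, lam ≠ q ^ n) (hmuq : ∀ n : ℤ, mu ≠ q ^ n)
    (hlamt : ∀ n : ℤ, lam * t ≠ q ^ n) (hmut : ∀ n : ℤ, mu * t ≠ q ^ n) :
    AL t lam q - AL t mu q =
      -((qPochInf q q) ^ 3 * jtheta (lam⁻¹ * mu) q * jtheta (lam⁻¹ * mu⁻¹ * t⁻¹) q) /
        (jtheta lam⁻¹ q * jtheta mu q * jtheta (lam⁻¹ * t⁻¹) q *
          jtheta (mu⁻¹ * t⁻¹) q) := by
  have hq : q ≠ 0 := norm_pos_iff.mp hq0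
  have hlt := mul_ne_zero hlam ht
  have hmt := mul_ne_zero hmu ht
  have n1 := jtheta_ne hq hq1 hlam hlamq
  have n2 := jtheta_ne hq hq1 hmu hmuq
  have n3 := jtheta_ne hq hq1 hlt hlamt
  have n4 := jtheta_ne hq hq1 hmt hmut
  obtain ⟨a, b, hN, hN1⟩ := num_mul hq hq1 ht
  obtain ⟨c, d, hG⟩ := theta_mul hq hq1 ht 1 t one_ne_zero ht (one_mul t)
  obtain ⟨e, f, hK⟩ := theta_mul hq hq1 ht mu⁻¹ (mu * t) (inv_ne_zero hmu) hmt (by field_simp)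
  have N1 := hN lam hlam hlamt
  have N2 := hN mu hmu hmut
  have G1 := hG lam hlam
  have G2 := hG mu hmu
  have G3 := hG t⁻¹ (inv_ne_zero ht)
  have K1 := hK lam hlam
  have K2 := hK mu hmu
  have K3 := hK t⁻¹ (inv_ne_zero ht)
  rw [inv_mul_cancel₀ hmu, jtheta_one, zero_mul] at K2
  rw [mul_inv_cancel₀ ht, jtheta_one, mul_zero] at G3
  rw [mul_assoc, mul_inv_cancel₀ ht, mul_one, ← mul_inv, jtheta_inv hmt] at K3
  rw [Cf_one hq hq1] at hN1
  rw [one_mul, mul_comm t] at G1 G2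
  have hAL1 : AL t lam q = (jtheta lam q)⁻¹ * Nf q t lam := rfl
  have hAL2 : AL t mu q = (jtheta mu q)⁻¹ * Nf q t mu := rfl
  have r1 : jtheta (lam⁻¹ * mu) q = -(mu⁻¹ * lam) * jtheta (mu⁻¹ * lam) q := by
    rw [← jtheta_inv (mul_ne_zero (inv_ne_zero hmu) hlam)]; congr 1; field_simp
  have r2 : jtheta (lam⁻¹ * mu⁻¹ * t⁻¹) q = -(mu * t * lam) * jtheta (mu * t * lam) q := by
    rw [← jtheta_inv (mul_ne_zero hmt hlam)]; congr 1; field_simp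
  have r3 : jtheta (lam⁻¹ * t⁻¹) q = -(lam * t) * jtheta (lam * t) q := by
    rw [← jtheta_inv hlt]; congr 1; field_simp
  have r4 : jtheta (mu⁻¹ * t⁻¹) q = -(mu * t) * jtheta (mu * t) q := by
    rw [← jtheta_inv hmt]; congr 1; field_simp
  rw [hAL1, hAL2, r1, r2, r3, r4, jtheta_inv hlam]
  generalize jtheta lam q = θl at *
  generalize jtheta mu q = θm at *
  generalize jtheta (lam * t) q = θlt at *
  generalize jtheta (mu * t) q = θmt at *
  generalize jtheta (mu⁻¹ * lam) q = k1 at *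
  generalize jtheta (mu * t * lam) q = k2 at *
  generalize Nf q t lam = Nl at *
  generalize Nf q t mu = Nm at *
  generalize qPochInf q q = P at *
  generalize Af q t lam = A1 at *
  generalize Bf q t lam = B1 at *
  generalize Af q t mu = A2 at *
  generalize Bf q t mu = B2 at *
  generalize Af q t t⁻¹ = A3 at *
  generalize Bf q t t⁻¹ = B3 at *
  have hg : θm * θmt ≠ 0 := mul_ne_zero n2 n4
  have key : (θm * θmt) * (θm * θmt) *
      ((mu * t) * (θlt * Nl * (θm * θmt) - θl * θlt * (θmt * Nm)) - P ^ 3 * (k1 * k2)) = 0 := by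
    have id : (c * A2 + d * B2) * (((a * A1 + b * B1) * (c * A2 + d * B2) - (c * A1 + d * B1) * (a * A2 + b * B2)) * (e * A3 + f * B3)
        - ((a * A3 + b * B3) * (c * A2 + d * B2) - (c * A3 + d * B3) * (a * A2 + b * B2)) * (e * A1 + f * B1))
        = (e * A2 + f * B2) * (((a * A1 + b * B1) * (c * A2 + d * B2) - (c * A1 + d * B1) * (a * A2 + b * B2)) * (c * A3 + d * B3)
        - ((a * A3 + b * B3) * (c * A2 + d * B2) - (c * A3 + d * B3) * (a * A2 + b * B2)) * (c * A1 + d * B1)) := by ring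
    rw [← N1, ← N2, ← G1, ← G2, ← G3, ← K1, ← K2, ← K3, ← hN1] at id
    linear_combination -id
  have key2 := (mul_eq_zero.mp key).resolve_left (mul_ne_zero hg hg)
  field_simp
  linear_combination key2
end

section
/- Let q ∈ ℂ with 0 < |q| < 1, let λ ∈ ℂ∖{0} with λ ∉ q^ℤ, and let m ∈ ℤ. Set t₀ = q^{−m} λ^{−1}. Then the function t ↦ (t − t₀) · AL(t,λ,q) / t tends to −1/θ(q^m λ; q) as t → t₀ with t ∉ λ^{−1} q^ℤ; equivalently, AL(t,λ,q) has a simple pole at t = t₀ with residue of AL(t,λ,q) dt/(2πit) equal to −1/θ(q^m λ; q). -/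
open Finset Filter

/-- Numerators of the Appell-Lerch sum. -/
noncomputable def alCoef (lam q : ℂ) (k : ℤ) : ℂ := (-1 : ℂ) ^ k * q ^ (k * (k + 1) / 2) * lam ^ k

lemma al_tri (k : ℤ) : (k + 1) * (k + 1 + 1) / 2 = k * (k + 1) / 2 + (k + 1) := by
  have : (k + 1) * (k + 1 + 1) = k * (k + 1) + (k + 1) * 2 := by ring
  rw [this, Int.add_mul_ediv_right _ _ (by norm_num)]

lemma al_tri_add (k m : ℤ) :
    (k + m) * (k + m + 1) / 2 = k * (k + 1) / 2 + m * (m + 1) / 2 + m * k := by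
  have h1 : (k + m) * (k + m + 1) = (k * (k + 1) + m * (m + 1)) + (m * k) * 2 := by ring
  rw [h1, Int.add_mul_ediv_right _ _ (by norm_num),
    Int.add_ediv_of_dvd_left (Int.even_mul_succ_self k).two_dvd]

lemma alCoef_ne {lam q : ℂ} (hq : q ≠ 0) (hl : lam ≠ 0) (k : ℤ) : alCoef lam q k ≠ 0 := by
  unfold alCoef
  have h1 : (-1 : ℂ) ≠ 0 := by norm_num
  exact mul_ne_zero (mul_ne_zero (zpow_ne_zero _ h1) (zpow_ne_zero _ hq)) (zpow_ne_zero _ hl)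

lemma alCoef_succ {lam q : ℂ} (hq : q ≠ 0) (hl : lam ≠ 0) (k : ℤ) :
    alCoef lam q (k + 1) = -(q ^ (k + 1) * lam) * alCoef lam q k := by
  unfold alCoef
  have h1 : (-1 : ℂ) ≠ 0 := by norm_num
  rw [al_tri, zpow_add₀ hq, zpow_add_one₀ h1, zpow_add_one₀ hl]
  ring

lemma alCoef_summable {lam q : ℂ} (hq : q ≠ 0) (hq1 : ‖q‖ < 1) (hl : lam ≠ 0) :
    Summable (fun k => ‖alCoef lam q k‖) := by
  have hp : Tendsto (fun n : ℕ => ‖q‖ ^ n) atTop (nhds 0) :=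
    tendsto_pow_atTop_nhds_zero_of_lt_one (norm_nonneg _) hq1
  apply Summable.of_nat_of_neg
  · apply summable_of_ratio_test_tendsto_lt_one (l := 0) zero_lt_one
    · exact Eventually.of_forall fun n => norm_ne_zero_iff.2 (alCoef_ne hq hl _)
    · have h2 := (hp.comp (tendsto_add_atTop_nat 1)).mul_const ‖lam‖
      rw [zero_mul] at h2
      refine h2.congr fun n => ?_
      have h0 : ‖alCoef lam q n‖ ≠ 0 := norm_ne_zero_iff.2 (alCoef_ne hq hl _)
      have e : q ^ ((n : ℤ) + 1) = q ^ (n + 1) := by exact_mod_cast zpow_natCast q (n + 1)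
      simp only [norm_norm, Nat.cast_add, Nat.cast_one, alCoef_succ hq hl, norm_mul, norm_neg,
        e, norm_pow, Function.comp]
      field_simp
  · apply summable_of_ratio_test_tendsto_lt_one (l := 0) zero_lt_one
    · exact Eventually.of_forall fun n => norm_ne_zero_iff.2 (alCoef_ne hq hl _)
    · have h2 := hp.mul_const ‖lam‖⁻¹
      rw [zero_mul] at h2
      refine h2.congr fun n => ?_
      have h0 : ‖alCoef lam q (-((n + 1 : ℕ) : ℤ))‖ ≠ 0 := norm_ne_zero_iff.2 (alCoef_ne hq hl _)
      have h3 := alCoef_succ hq hl (-((n + 1 : ℕ) : ℤ))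
      have e : -((n + 1 : ℕ) : ℤ) + 1 = -(n : ℤ) := by push_cast; ring
      rw [e, zpow_neg, zpow_natCast] at h3
      have hqn : ‖q‖ ≠ 0 := norm_ne_zero_iff.2 hq
      have hln : ‖lam‖ ≠ 0 := norm_ne_zero_iff.2 hl
      rw [norm_norm, norm_norm, h3, norm_mul, norm_neg, norm_mul, norm_inv, norm_pow]
      field_simp

lemma al_theta {lam q : ℂ} (hq : q ≠ 0) (hl : lam ≠ 0) (m : ℤ) :
    jtheta lam q = alCoef lam q m * jtheta (q ^ m * lam) q := by
  unfold jtheta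
  rw [← tsum_mul_left, ← (Equiv.addRight m).tsum_eq]
  refine tsum_congr fun k => ?_
  have h1 : (-1 : ℂ) ≠ 0 := by norm_num
  simp only [Equiv.coe_addRight, alCoef]
  rw [al_tri_add, zpow_add₀ hq, zpow_add₀ hq, zpow_add₀ h1, zpow_add₀ hl, mul_zpow, zpow_mul]
  ring

lemma al_bound {q u : ℂ} (hq : q ≠ 0) (hq1 : ‖q‖ < 1)
    (h1 : ‖u‖ * ‖q‖ ≤ (1 + ‖q‖) / 2) (h2 : (1 + ‖q‖) / 2 ≤ ‖u‖) (j : ℤ) (hj : j ≠ 0) :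
    (1 - ‖q‖) / 2 ≤ ‖1 - u * q ^ j‖ := by
  have hr : 0 < ‖q‖ := norm_pos_iff.2 hq
  rcases lt_or_gt_of_ne hj with h | h
  · have h3 : ‖q‖ ^ (-1 : ℤ) ≤ ‖q‖ ^ j := zpow_le_zpow_right_of_le_one₀ hr hq1.le (by omega)
    have h4 := norm_sub_norm_le (u * q ^ j) 1
    rw [norm_sub_rev, norm_mul, norm_zpow, norm_one] at h4
    rw [zpow_neg_one] at h3
    have h5 : (1 + ‖q‖) / 2 * ‖q‖⁻¹ ≤ ‖u‖ * ‖q‖ ^ j := by gcongr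
    have h6 : 1 + (1 - ‖q‖) / 2 ≤ (1 + ‖q‖) / 2 * ‖q‖⁻¹ := by
      rw [← div_eq_mul_inv, le_div_iff₀ hr]
      nlinarith
    linarith
  · have h3 : ‖q‖ ^ j ≤ ‖q‖ ^ (1 : ℤ) := zpow_le_zpow_right_of_le_one₀ hr hq1.le (by omega)
    have h4 := norm_sub_norm_le 1 (u * q ^ j)
    rw [norm_mul, norm_zpow, norm_one] at h4
    rw [zpow_one] at h3
    have h5 : ‖u‖ * ‖q‖ ^ j ≤ ‖u‖ * ‖q‖ := by gcongr
    linarith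

/-- The Appell-Lerch sum has a simple pole at `t = q^{−m} λ^{−1}` with residue
(of `AL(t,λ,q) dt/(2πit)`) equal to `−1/θ(q^m λ; q)`. -/
theorem appell_lerch_residue
    (q : ℂ) (hq0 : 0 < ‖q‖) (hq1 : ‖q‖ < 1)
    (lam : ℂ) (hlam : lam ≠ 0) (hlamq : ∀ n : ℤ, lam ≠ q ^ n) (m : ℤ) :
    Tendsto (fun t : ℂ => (t - q ^ (-m) * lam⁻¹) * AL t lam q / t)
      (nhdsWithin (q ^ (-m) * lam⁻¹) {t : ℂ | ∀ n : ℤ, t ≠ lam⁻¹ * q ^ n})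
      (nhds (-(jtheta (q ^ m * lam) q)⁻¹)) := by
  have hq : q ≠ 0 := norm_pos_iff.1 hq0
  have hqm : q ^ m ≠ 0 := zpow_ne_zero _ hq
  set t₀ : ℂ := q ^ (-m) * lam⁻¹ with ht₀
  have ht0 : t₀ ≠ 0 := mul_ne_zero (zpow_ne_zero _ hq) (inv_ne_zero hlam)
  have hlt : lam * t₀ * q ^ m = 1 := by
    rw [ht₀, zpow_neg]; field_simp
  set S : Set ℂ := {t : ℂ | ∀ n : ℤ, t ≠ lam⁻¹ * q ^ n} with hS
  set a := alCoef lam q with ha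
  let R : ℂ → ℂ := fun t => ∑' k : ℤ, if k = m then 0 else a k / (1 - lam * t * q ^ k)
  have hsum : Summable (fun k => ‖a k‖) := alCoef_summable hq hq1 hlam
  set c : ℝ := (1 - ‖q‖) / 2 with hc
  have hc0 : 0 < c := by rw [hc]; linarith
  -- the uniform lower bound near the pole
  have hu : Tendsto (fun t : ℂ => ‖lam * t * q ^ m‖) (nhdsWithin t₀ S) (nhds 1) := by
    have h : Continuous fun t : ℂ => ‖lam * t * q ^ m‖ := by fun_prop
    have h2 := h.tendsto t₀
    simp only [hlt, norm_one] at h2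
    exact h2.mono_left nhdsWithin_le_nhds
  have hev : ∀ᶠ t in nhdsWithin t₀ S, ∀ k : ℤ, k ≠ m → c ≤ ‖1 - lam * t * q ^ k‖ := by
    have e1 : ∀ᶠ t in nhdsWithin t₀ S, ‖lam * t * q ^ m‖ * ‖q‖ < (1 + ‖q‖) / 2 :=
      (hu.mul_const ‖q‖).eventually_lt_const (by linarith)
    have e2 : ∀ᶠ t in nhdsWithin t₀ S, (1 + ‖q‖) / 2 < ‖lam * t * q ^ m‖ :=
      hu.eventually_const_lt (by linarith)
    filter_upwards [e1, e2] with t h1 h2 k hk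
    have := al_bound hq hq1 h1.le h2.le (k - m) (sub_ne_zero.2 hk)
    rwa [mul_assoc, ← zpow_add₀ hq, add_sub_cancel] at this
  have hterm : ∀ᶠ t in nhdsWithin t₀ S, ∀ k : ℤ,
      ‖(if k = m then 0 else a k / (1 - lam * t * q ^ k))‖ ≤ ‖a k‖ / c := by
    filter_upwards [hev] with t ht k
    split_ifs with hk
    · rw [norm_zero]; positivity
    · rw [norm_div]
      have := ht k hk
      gcongr
  have hR : ∀ᶠ t in nhdsWithin t₀ S, ‖R t‖ ≤ ∑' k, ‖a k‖ / c := by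
    filter_upwards [hterm] with t ht
    exact tsum_of_norm_bounded (hsum.div_const c).hasSum ht
  have htne : ∀ᶠ t in nhdsWithin t₀ S, t ≠ 0 :=
    nhdsWithin_le_nhds (isOpen_ne.mem_nhds ht0)
  have hid : Tendsto (fun t : ℂ => t) (nhdsWithin t₀ S) (nhds t₀) :=
    tendsto_id.mono_left nhdsWithin_le_nhds
  have heq : ∀ᶠ t in nhdsWithin t₀ S,
      (jtheta lam q)⁻¹ * (-(a m) / (lam * t * q ^ m)) +
        (jtheta lam q)⁻¹ * ((t - t₀) / t * R t) = (t - t₀) * AL t lam q / t := by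
    filter_upwards [hterm, htne, self_mem_nhdsWithin] with t ht h0 hmem
    have hne : t - t₀ ≠ 0 := by
      have := hmem (-m)
      rw [mul_comm] at this
      exact sub_ne_zero.2 this
    have hs0 : Summable (fun k : ℤ => if k = m then 0 else a k / (1 - lam * t * q ^ k)) :=
      Summable.of_norm_bounded (hsum.div_const c) ht
    have hs : HasSum (fun k : ℤ => a k / (1 - lam * t * q ^ k))
        (a m / (1 - lam * t * q ^ m) + R t) := by
      have h := (hasSum_ite_eq m (a m / (1 - lam * t * q ^ m))).add hs0.hasSum
      convert h using 1
      funext k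
      by_cases hk : k = m
      · subst hk; simp
      · simp [hk]
    have hAL : AL t lam q = (jtheta lam q)⁻¹ * (a m / (1 - lam * t * q ^ m) + R t) := by
      rw [← hs.tsum_eq]; rfl
    have hd : 1 - lam * t * q ^ m = -(lam * q ^ m * (t - t₀)) := by
      linear_combination -hlt
    rw [hAL, hd]
    field_simp
  have hlim1 : Tendsto (fun t : ℂ => (jtheta lam q)⁻¹ * (-(a m) / (lam * t * q ^ m)))
      (nhdsWithin t₀ S) (nhds (-(jtheta (q ^ m * lam) q)⁻¹)) := by
    have h : Tendsto (fun t : ℂ => (jtheta lam q)⁻¹ * (-(a m) / (lam * t * q ^ m)))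
      (nhdsWithin t₀ S) (nhds ((jtheta lam q)⁻¹ * (-(a m) / (lam * t₀ * q ^ m)))) := by
      refine Tendsto.const_mul _ (Tendsto.div tendsto_const_nhds ?_ (by rw [hlt]; simp))
      exact (hid.const_mul lam).mul_const _
    have ham : a m ≠ 0 := alCoef_ne hq hlam m
    convert h using 2
    rw [hlt, al_theta hq hlam m, mul_inv, ← ha]
    field_simp
  have hlim2 : Tendsto (fun t : ℂ => (jtheta lam q)⁻¹ * ((t - t₀) / t * R t))
      (nhdsWithin t₀ S) (nhds 0) := by
    have h : Tendsto (fun t : ℂ => (t - t₀) / t) (nhdsWithin t₀ S) (nhds 0) := by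
      have := (hid.sub_const t₀).div hid ht0
      rw [sub_self, zero_div] at this
      exact this
    have h2 : Tendsto (fun t : ℂ => (t - t₀) / t * R t) (nhdsWithin t₀ S) (nhds 0) :=
      h.zero_mul_isBoundedUnder_le ⟨_, eventually_map.2 hR⟩
    simpa using h2.const_mul (jtheta lam q)⁻¹
  have hfin := hlim1.add hlim2
  rw [add_zero] at hfin
  exact hfin.congr' heq
end

section
/- Let q ∈ ℂ with 0 < |q| < 1, let λ ∈ ℂ∖{0} with λ ∉ q^ℤ, and let t ∈ ℂ∖{0} with λt ∉ q^ℤ. Then the Appell-Lerch sum satisfies the inhomogeneous linear q-difference equation AL(qt, λ, q) + t · AL(t, λ, q) = 1. -/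
open Finset Filter

/-- The theta summand. -/
noncomputable def thTerm (q x : ℂ) (k : ℤ) : ℂ := (-1 : ℂ) ^ k * q ^ (k * (k + 1) / 2) * x ^ k

lemma thTerm_zero (q x : ℂ) : thTerm q x 0 = 1 := by simp [thTerm]

lemma thTerm_succ {q x : ℂ} (hq : q ≠ 0) (hx : x ≠ 0) (k : ℤ) :
    thTerm q x (k + 1) = -(q ^ (k + 1) * x * thTerm q x k) := by
  have h : (k + 1) * (k + 1 + 1) / 2 = k * (k + 1) / 2 + (k + 1) := by
    have : (k + 1) * (k + 1 + 1) = k * (k + 1) + 2 * (k + 1) := by ring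
    rw [this, Int.add_mul_ediv_left _ _ (by norm_num)]
  unfold thTerm
  rw [h, zpow_add₀ hq, zpow_add_one₀ hx, zpow_add_one₀ (by norm_num : (-1 : ℂ) ≠ 0)]
  ring

lemma thTerm_ne {q x : ℂ} (hq : q ≠ 0) (hx : x ≠ 0) (k : ℤ) : thTerm q x k ≠ 0 := by
  unfold thTerm
  exact mul_ne_zero (mul_ne_zero (zpow_ne_zero _ (by norm_num)) (zpow_ne_zero _ hq))
    (zpow_ne_zero _ hx)

lemma thTerm_pred {q x : ℂ} (hq : q ≠ 0) (hx : x ≠ 0) (k : ℤ) :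
    thTerm q x (k - 1) = -(q ^ (-k) * x⁻¹ * thTerm q x k) := by
  have h := thTerm_succ hq hx (k - 1)
  rw [sub_add_cancel] at h
  rw [h, zpow_neg]
  have := zpow_ne_zero k hq
  field_simp

lemma summable_thTerm {q x : ℂ} (hq0 : q ≠ 0) (hq1 : ‖q‖ < 1) (hx : x ≠ 0) :
    Summable (thTerm q x) := by
  have hlim : ∀ c : ℝ, Tendsto (fun n : ℕ => ‖q‖ ^ n * c) atTop (nhds 0) := fun c => by
    simpa using (tendsto_pow_atTop_nhds_zero_of_lt_one (norm_nonneg q) hq1).mul_const c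
  apply Summable.of_nat_of_neg
  · refine summable_of_ratio_test_tendsto_lt_one (l := 0) one_pos
      (Eventually.of_forall fun n => thTerm_ne hq0 hx _) ?_
    refine (hlim (‖q‖ * ‖x‖)).congr fun n => ?_
    have := norm_ne_zero_iff.2 (thTerm_ne hq0 hx (n : ℤ))
    push_cast
    rw [thTerm_succ hq0 hx, norm_neg, norm_mul, norm_mul, mul_div_cancel_right₀ _ this,
      show ((n : ℤ) + 1) = ((n + 1 : ℕ) : ℤ) by push_cast; ring, zpow_natCast, norm_pow, pow_succ]
    ring
  · refine summable_of_ratio_test_tendsto_lt_one (l := 0) one_pos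
      (Eventually.of_forall fun n => thTerm_ne hq0 hx _) ?_
    refine (hlim (‖x⁻¹‖)).congr fun n => ?_
    have := norm_ne_zero_iff.2 (thTerm_ne hq0 hx (-(n : ℤ)))
    push_cast
    rw [show (-((n : ℤ) + 1)) = -(n : ℤ) - 1 by ring]
    rw [thTerm_pred hq0 hx, norm_neg, norm_mul, norm_mul, mul_div_cancel_right₀ _ this,
      neg_neg, zpow_natCast, norm_pow]

/-- reciprocal of `(q;q)_m`, extended by zero to negative `m`. -/
noncomputable def wInv (q : ℂ) (m : ℤ) : ℂ := if 0 ≤ m then (qPoch q q m.toNat)⁻¹ else 0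

lemma one_sub_pow_ne {q : ℂ} (hq1 : ‖q‖ < 1) (n : ℕ) : 1 - q * q ^ n ≠ 0 := by
  intro h
  have h1 : ‖q ^ (n + 1)‖ = 1 := by
    rw [pow_succ', ← sub_eq_zero.1 h, norm_one]
  rw [norm_pow] at h1
  exact absurd h1 (pow_lt_one₀ (norm_nonneg q) hq1 (by omega)).ne

lemma qPoch_ne {q : ℂ} (hq1 : ‖q‖ < 1) (n : ℕ) : qPoch q q n ≠ 0 :=
  Finset.prod_ne_zero_iff.2 fun j _ => one_sub_pow_ne hq1 j

lemma qPoch_succ (q : ℂ) (n : ℕ) : qPoch q q (n + 1) = qPoch q q n * (1 - q * q ^ n) :=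
  Finset.prod_range_succ _ _

lemma wInv_pred {q : ℂ} (hq1 : ‖q‖ < 1) (m : ℤ) :
    wInv q (m - 1) = (1 - q ^ m) * wInv q m := by
  rcases lt_trichotomy m 0 with h | h | h
  · rw [wInv, wInv, if_neg (by omega), if_neg (by omega), mul_zero]
  · subst h; simp [wInv]
  · obtain ⟨n, rfl⟩ : ∃ n : ℕ, m = (n : ℤ) + 1 := ⟨(m - 1).toNat, by omega⟩
    have h2 := one_sub_pow_ne hq1 n
    have h3 := qPoch_ne hq1 n
    have e : ((n : ℤ) + 1).toNat = n + 1 := by omega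
    rw [wInv, wInv, if_pos (by omega), if_pos (by omega), e, qPoch_succ,
      show ((n : ℤ) + 1) = ((n + 1 : ℕ) : ℤ) by push_cast; ring, zpow_natCast, pow_succ']
    simp only [Nat.cast_add, Nat.cast_one, add_sub_cancel_right, Int.toNat_natCast]
    field_simp

/-- finite product side -/
noncomputable def finJ (q x : ℂ) (n : ℕ) : ℂ :=
  (∏ j ∈ Finset.range n, (1 - x * q * q ^ j)) * ∏ j ∈ Finset.range n, (1 - x⁻¹ * q ^ j)

lemma finite_triple {q x : ℂ} (hq0 : q ≠ 0) (hq1 : ‖q‖ < 1) (hx : x ≠ 0) (n : ℕ) :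
    HasSum (fun k : ℤ => thTerm q x k * (qPoch q q (2 * n) * (wInv q (n + k) * wInv q (n - k))))
      (finJ q x n) := by
  induction n with
  | zero =>
    convert hasSum_ite_eq (0 : ℤ) (1 : ℂ) using 1
    · ext k
      split_ifs with h
      · subst h; simp [thTerm_zero, wInv, qPoch]
      · rcases lt_or_gt_of_ne h with h | h
        · simp [wInv, not_le.2 h]
        · simp [wInv, not_le.2 h]
    · simp [finJ]
  | succ n ih =>
    have hs1 := (Equiv.addRight (-1 : ℤ)).hasSum_iff.2 ih
    have hs2 := (Equiv.addRight (1 : ℤ)).hasSum_iff.2 ih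
    have key := ((ih.mul_left (1 + q ^ (2 * n + 1))).add (hs1.mul_left (-(x * q ^ (n + 1))))).add
      (hs2.mul_left (-(x⁻¹ * q ^ n)))
    have hv : finJ q x (n + 1) = (1 + q ^ (2 * n + 1)) * finJ q x n +
        -(x * q ^ (n + 1)) * finJ q x n + -(x⁻¹ * q ^ n) * finJ q x n := by
      rw [finJ, finJ, Finset.prod_range_succ, Finset.prod_range_succ]
      field_simp
      ring
    rw [hv]
    refine (congrArg (fun f => HasSum f _) (funext fun k => ?_)).mpr key
    · simp only [Function.comp_apply, Equiv.coe_addRight]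
      have a1 : thTerm q x (k + -1) = -(q ^ (-k) * x⁻¹ * thTerm q x k) := thTerm_pred hq0 hx k
      rw [a1, thTerm_succ hq0 hx]
      have w1 : wInv q (n + k) = (1 - q ^ ((n : ℤ) + 1 + k)) * wInv q (n + 1 + k) := by
        rw [← wInv_pred hq1]; congr 1; ring
      have w2 : wInv q (n - k) = (1 - q ^ ((n : ℤ) + 1 - k)) * wInv q (n + 1 - k) := by
        rw [← wInv_pred hq1]; congr 1; ring
      have w3 : wInv q (n + (k + -1)) = (1 - q ^ ((n : ℤ) + k)) * wInv q (n + k) := by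
        rw [← wInv_pred hq1]; congr 1; ring
      have w4 : wInv q (n - (k + 1)) = (1 - q ^ ((n : ℤ) - k)) * wInv q (n - k) := by
        rw [← wInv_pred hq1]; congr 1; ring
      have w5 : (n : ℤ) - (k + -1) = n + 1 - k := by ring
      have w6 : (n : ℤ) + (k + 1) = n + 1 + k := by ring
      have p : qPoch q q (2 * (n + 1)) =
          qPoch q q (2 * n) * (1 - q ^ (2 * n + 1)) * (1 - q ^ (2 * n + 2)) := by
        rw [show 2 * (n + 1) = 2 * n + 1 + 1 by ring, qPoch_succ, qPoch_succ]; ring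
      rw [w3, w4, w5, w6, w1, w2, p]
      push_cast
      generalize wInv q (n + 1 + k) = A
      generalize wInv q (n + 1 - k) = B
      have hk := zpow_ne_zero k hq0
      simp only [zpow_add₀ hq0, zpow_sub₀ hq0, zpow_neg, zpow_natCast, zpow_one]
      generalize q ^ k = K at *
      simp only [pow_succ, pow_mul', pow_zero, one_mul]
      generalize q ^ n = N
      generalize qPoch q q (2 * n) = P
      field_simp
      ring

lemma summable_geo {q : ℂ} (hq1 : ‖q‖ < 1) (c : ℂ) : Summable fun j : ℕ => ‖-(c * q ^ j)‖ := by
  simp only [norm_neg, norm_mul, norm_pow]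
  exact (summable_geometric_of_lt_one (norm_nonneg q) hq1).mul_left _

lemma prod_lim {q : ℂ} (hq1 : ‖q‖ < 1) (c : ℂ) (h : ∀ j : ℕ, 1 - c * q ^ j ≠ 0) :
    ∃ L : ℂ, L ≠ 0 ∧
      Tendsto (fun n => ∏ j ∈ Finset.range n, (1 - c * q ^ j)) atTop (nhds L) := by
  have hs := summable_geo hq1 c
  refine ⟨∏' j : ℕ, (1 + -(c * q ^ j)),
    tprod_one_add_ne_zero_of_summable (fun i => by simpa [← sub_eq_add_neg] using h i) hs, ?_⟩
  simpa only [← sub_eq_add_neg] using (multipliable_one_add_of_summable hs).tendsto_prod_tprod_nat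

lemma bdd_of_tendsto {u : ℕ → ℂ} {l : ℂ} (h : Tendsto u atTop (nhds l)) :
    ∃ C : ℝ, ∀ n, ‖u n‖ ≤ C := by
  obtain ⟨C, hC⟩ := (Metric.isBounded_range_of_tendsto u h).exists_norm_le
  exact ⟨C, fun n => hC _ ⟨n, rfl⟩⟩

lemma jtheta_ne {q x : ℂ} (hq0 : q ≠ 0) (hq1 : ‖q‖ < 1) (hx : x ≠ 0)
    (hxq : ∀ n : ℤ, x ≠ q ^ n) : jtheta x q ≠ 0 := by
  intro h0
  obtain ⟨P, hP0, hP⟩ := prod_lim hq1 q (one_sub_pow_ne hq1)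
  change Tendsto (qPoch q q) atTop (nhds P) at hP
  obtain ⟨L1, hL1, h1⟩ := prod_lim hq1 (x * q) (by
    intro j hj
    apply hxq (-((j : ℤ) + 1))
    rw [zpow_neg, zpow_add_one₀ hq0, zpow_natCast]
    have := pow_ne_zero j hq0
    field_simp
    linear_combination -hj)
  obtain ⟨L2, hL2, h2⟩ := prod_lim hq1 x⁻¹ (by
    intro j hj
    apply hxq j
    rw [zpow_natCast]
    field_simp at hj
    linear_combination hj)
  have hF : Tendsto (finJ q x) atTop (nhds (L1 * L2)) := h1.mul h2
  have hPi : Tendsto (fun n => (qPoch q q n)⁻¹) atTop (nhds P⁻¹) := hP.inv₀ hP0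
  obtain ⟨C1, hC1⟩ := bdd_of_tendsto hP
  obtain ⟨C2, hC2⟩ := bdd_of_tendsto hPi
  have hC10 : 0 ≤ C1 := (norm_nonneg _).trans (hC1 0)
  have hC20 : 0 ≤ C2 := (norm_nonneg _).trans (hC2 0)
  have hw : ∀ m, ‖wInv q m‖ ≤ C2 := by
    intro m
    unfold wInv
    split_ifs
    · exact hC2 _
    · simpa using hC20
  have hwlim : ∀ k : ℤ, Tendsto (fun n : ℕ => wInv q (n + k)) atTop (nhds P⁻¹) := by
    intro k
    have ht : Tendsto (fun n : ℕ => ((n : ℤ) + k).toNat) atTop atTop := by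
      refine tendsto_atTop.2 fun b => ?_
      filter_upwards [eventually_ge_atTop (b + k.natAbs)] with n hn
      omega
    refine (hPi.comp ht).congr' ?_
    filter_upwards [eventually_ge_atTop k.natAbs] with n hn
    rw [wInv, if_pos (by omega)]
    rfl
  have hlim := tendsto_tsum_of_dominated_convergence (𝓕 := atTop)
    (f := fun (n : ℕ) (k : ℤ) =>
      thTerm q x k * (qPoch q q (2 * n) * (wInv q (n + k) * wInv q (n - k))))
    (g := fun k => thTerm q x k * (P * (P⁻¹ * P⁻¹)))
    (bound := fun k => ‖thTerm q x k‖ * (C1 * (C2 * C2)))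
    ((summable_thTerm hq0 hq1 hx).norm.mul_right _)
    (fun k => by
      refine Tendsto.const_mul _ (Tendsto.mul ?_ ((hwlim k).mul ?_))
      · exact hP.comp (tendsto_id.const_mul_atTop' (by norm_num))
      · simpa only [← sub_eq_add_neg] using hwlim (-k))
    (Eventually.of_forall fun n k => by
      simp only [norm_mul]
      gcongr
      · exact hC1 _
      · exact hw _
      · exact hw _)
  have hz : ∑' k, thTerm q x k * (P * (P⁻¹ * P⁻¹)) = 0 := by
    rw [tsum_mul_right]
    have : ∑' k, thTerm q x k = 0 := h0
    rw [this, zero_mul]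
  rw [hz] at hlim
  have := tendsto_nhds_unique hF
    (hlim.congr fun n => (finite_triple hq0 hq1 hx n).tsum_eq)
  exact mul_ne_zero hL1 hL2 this

lemma summable_AL {q x : ℂ} (hq0 : q ≠ 0) (hq1 : ‖q‖ < 1) (hx : x ≠ 0) {u : ℂ} (hu : u ≠ 0)
    (huq : ∀ n : ℤ, u ≠ q ^ n) :
    Summable (fun k : ℤ => thTerm q x k / (1 - u * q ^ k)) := by
  have hl : Tendsto (fun n : ℕ => q ^ n) atTop (nhds 0) := tendsto_pow_atTop_nhds_zero_of_norm_lt_one hq1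
  have h1 : Tendsto (fun n : ℕ => (1 - u * q ^ (n : ℤ))⁻¹) atTop (nhds (1 - u * 0)⁻¹) := by
    simp only [zpow_natCast]
    exact (tendsto_const_nhds.sub (hl.const_mul u)).inv₀ (by simp)
  have h2 : Tendsto (fun n : ℕ => (1 - u * q ^ (-(n : ℤ)))⁻¹) atTop (nhds (0 * (0 - u)⁻¹)) := by
    refine (hl.mul ((hl.sub_const u).inv₀ (by simpa using hu))).congr fun n => ?_
    have e1 : q ^ n - u ≠ 0 := fun h => huq n (by rw [zpow_natCast]; exact (sub_eq_zero.1 h).symm)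
    have e2 := pow_ne_zero n hq0
    have e3 : 1 - u * (q ^ n)⁻¹ = (q ^ n - u) / q ^ n := by field_simp
    rw [zpow_neg, zpow_natCast, e3, inv_div, div_eq_mul_inv]
  obtain ⟨C1, hC1⟩ := bdd_of_tendsto h1
  obtain ⟨C2, hC2⟩ := bdd_of_tendsto h2
  refine Summable.of_norm_bounded ((summable_thTerm hq0 hq1 hx).norm.mul_right (max C1 C2)) ?_
  intro k
  rw [div_eq_mul_inv, norm_mul]
  gcongr
  obtain ⟨n, rfl | rfl⟩ := k.eq_nat_or_neg
  · exact (hC1 n).trans (le_max_left _ _)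
  · exact (hC2 n).trans (le_max_right _ _)

/-- The Appell-Lerch sum satisfies the inhomogeneous linear q-difference equation
`AL(qt, λ, q) + t · AL(t, λ, q) = 1`. -/
theorem appell_lerch_qdifference
    (q : ℂ) (hq0 : 0 < ‖q‖) (hq1 : ‖q‖ < 1)
    (lam : ℂ) (hlam : lam ≠ 0) (hlamq : ∀ n : ℤ, lam ≠ q ^ n)
    (t : ℂ) (ht : t ≠ 0) (hlamt : ∀ n : ℤ, lam * t ≠ q ^ n) :
    AL (q * t) lam q + t * AL t lam q = 1 := by
  have hq : q ≠ 0 := norm_pos_iff.1 hq0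
  have hth := jtheta_ne hq hq1 hlam hlamq
  have hS := summable_AL hq hq1 hlam (mul_ne_zero hlam ht) hlamt
  have hS2 := summable_AL hq hq1 hlam (u := lam * (q * t))
    (mul_ne_zero hlam (mul_ne_zero hq ht)) (fun n h => hlamt (n - 1) (by
      rw [zpow_sub_one₀ hq, ← h]; field_simp))
  have hS3 := (Equiv.addRight (1 : ℤ)).summable_iff.2 hS
  have hsum : ∑' k : ℤ, thTerm q lam k / (1 - lam * (q * t) * q ^ k) +
      t * ∑' k : ℤ, thTerm q lam k / (1 - lam * t * q ^ k) = jtheta lam q := by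
    rw [← (Equiv.addRight (1 : ℤ)).tsum_eq (fun k : ℤ => thTerm q lam k / (1 - lam * t * q ^ k)),
      ← tsum_mul_left]
    refine (hS2.tsum_add (hS3.mul_left t)).symm.trans ?_
    refine tsum_congr fun k => ?_
    change _ + t * (thTerm q lam (k + 1) / (1 - lam * t * q ^ (k + 1))) = thTerm q lam k
    have hne : 1 - lam * t * q ^ (k + 1) ≠ 0 := by
      intro h
      apply hlamt (-(k + 1))
      rw [zpow_neg]
      exact eq_inv_of_mul_eq_one_left (sub_eq_zero.1 h).symm
    have e : 1 - lam * (q * t) * q ^ k = 1 - lam * t * q ^ (k + 1) := by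
      rw [zpow_add_one₀ hq]; ring
    rw [e, thTerm_succ hq hlam]
    field_simp
    ring
  unfold AL
  change (jtheta lam q)⁻¹ * (∑' k : ℤ, thTerm q lam k / (1 - lam * (q * t) * q ^ k)) +
    t * ((jtheta lam q)⁻¹ * ∑' k : ℤ, thTerm q lam k / (1 - lam * t * q ^ k)) = 1
  rw [mul_left_comm t, ← mul_add, hsum, inv_mul_cancel₀ hth]
end

section
/- Let q ∈ ℂ with 0 < |q| < 1 and let h be a holomorphic function on ℂ∖{0} satisfying h(qt) + t·h(t) = 0 for every t ≠ 0. Then h vanishes identically on ℂ∖{0}. -/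
open Filter Topology in
/-- A function holomorphic on `ℂ∖{0}` satisfying `h(qt) + t·h(t) = 0` for all
`t ≠ 0` (with `0 < |q| < 1`) vanishes identically on `ℂ∖{0}`. -/
theorem holomorphic_solution_vanishes
    (q : ℂ) (hq0 : 0 < ‖q‖) (hq1 : ‖q‖ < 1)
    (h : ℂ → ℂ) (hhol : ∀ t : ℂ, t ≠ 0 → DifferentiableAt ℂ h t)
    (heq : ∀ t : ℂ, t ≠ 0 → h (q * t) + t * h t = 0) :
    ∀ t : ℂ, t ≠ 0 → h t = 0 := by
  have hq : q ≠ 0 := norm_pos_iff.1 hq0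
  -- the compact fundamental annulus
  have hK : IsCompact (Metric.closedBall (0 : ℂ) 1 ∩ {t : ℂ | ‖q‖ ≤ ‖t‖}) :=
    (isCompact_closedBall _ _).inter_right (isClosed_le continuous_const continuous_norm)
  obtain ⟨M, hM⟩ := hK.exists_bound_of_continuousOn (f := h) (by
    rintro t ⟨-, ht⟩
    have ht' : ‖q‖ ≤ ‖t‖ := ht
    exact (hhol t (norm_pos_iff.1 (hq0.trans_le ht'))).continuousAt.continuousWithinAt)
  have hind : ∀ n : ℕ, ∀ s : ℂ, ‖q‖ ≤ ‖s‖ → ‖s‖ ≤ 1 → ‖h (q ^ n * s)‖ ≤ M := by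
    intro n s h1 h2
    have hs : s ≠ 0 := norm_pos_iff.1 (hq0.trans_le h1)
    induction n with
    | zero => simpa using hM s ⟨by simpa using h2, h1⟩
    | succ n ih =>
      have e := heq (q ^ n * s) (mul_ne_zero (pow_ne_zero _ hq) hs)
      have e2 : h (q ^ (n + 1) * s) = -(q ^ n * s * h (q ^ n * s)) := by
        rw [pow_succ', mul_assoc]; exact eq_neg_of_add_eq_zero_left e
      rw [e2, norm_neg, norm_mul]
      have : ‖q ^ n * s‖ ≤ 1 := by
        rw [norm_mul, norm_pow]
        exact mul_le_one₀ (pow_le_one₀ hq0.le hq1.le) (norm_nonneg _) h2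
      exact (mul_le_of_le_one_left (norm_nonneg _) this).trans ih
  have hbd : ∀ t : ℂ, t ≠ 0 → ‖t‖ ≤ 1 → ‖h t‖ ≤ M := by
    intro t ht ht1
    obtain ⟨n, hn1, hn2⟩ := exists_nat_pow_near_of_lt_one (norm_pos_iff.2 ht) ht1 hq0 hq1
    have hp : 0 < ‖q‖ ^ n := pow_pos hq0 n
    have := hind n (t / q ^ n)
      (by rw [norm_div, norm_pow, le_div_iff₀ hp, ← pow_succ']; exact hn1.le)
      (by rw [norm_div, norm_pow, div_le_one hp]; exact hn2)
    rwa [mul_div_cancel₀ _ (pow_ne_zero n hq)] at this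
  have hs : Metric.closedBall (0 : ℂ) 1 ∈ 𝓝 (0 : ℂ) := Metric.closedBall_mem_nhds _ one_pos
  have hdiff := Complex.differentiableOn_update_limUnder_of_bddAbove (f := h) hs
    (fun z hz => (hhol z hz.2).differentiableWithinAt)
    ⟨M, by
      rintro _ ⟨z, hz, rfl⟩
      exact hbd z hz.2 (by simpa using hz.1)⟩
  set g := Function.update h 0 (limUnder (𝓝[≠] 0) h) with hg
  have hgh : ∀ t : ℂ, t ≠ 0 → g t = h t := fun t ht => Function.update_of_ne ht _ _
  have hgd : Differentiable ℂ g := by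
    intro z
    by_cases hz : z = 0
    · subst hz; exact hdiff.differentiableAt hs
    · refine (hhol z hz).congr_of_eventuallyEq ?_
      filter_upwards [isOpen_ne.mem_nhds hz] with t ht using hgh t ht
  have hga : AnalyticOnNhd ℂ g Set.univ := fun z _ => hgd.analyticAt z
  have hz : ∀ᶠ z in 𝓝 (0 : ℂ), g z = 0 := by
    by_contra hcon
    obtain ⟨n, k, hk, hk0, hgk⟩ :=
      (hgd.analyticAt 0).exists_eventuallyEq_pow_smul_nonzero_iff.2 hcon
    have hc : Tendsto (fun t : ℂ => q * t) (𝓝 0) (𝓝 0) := by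
      have : ContinuousAt (fun t : ℂ => q * t) 0 := by fun_prop
      simpa [ContinuousAt] using this
    have hlim : Tendsto (fun t : ℂ => q ^ n * k (q * t) + t * k t) (𝓝[≠] 0)
        (𝓝 (q ^ n * k 0 + 0 * k 0)) :=
      Tendsto.mono_left (((hk.continuousAt.tendsto.comp hc).const_mul _).add
        (tendsto_id.mul hk.continuousAt.tendsto)) nhdsWithin_le_nhds
    have hzero : ∀ᶠ t in 𝓝[≠] (0 : ℂ), q ^ n * k (q * t) + t * k t = 0 := by
      filter_upwards [self_mem_nhdsWithin, nhdsWithin_le_nhds hgk,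
        nhdsWithin_le_nhds (hc.eventually hgk)] with t ht h1 h2
      have ht : t ≠ 0 := ht
      have e := heq t ht
      simp only [Set.mem_setOf_eq, sub_zero, smul_eq_mul] at h1 h2
      rw [← hgh t ht, ← hgh _ (mul_ne_zero hq ht), h1, h2] at e
      apply mul_left_cancel₀ (pow_ne_zero n ht)
      rw [mul_zero, ← e]; ring
    have := tendsto_nhds_unique (hlim.congr' hzero) tendsto_const_nhds
    simp [hq, hk0] at this
  intro t ht
  rw [← hgh t ht]
  exact hga.eqOn_zero_of_preconnected_of_eventuallyEq_zero isPreconnected_univ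
    (Set.mem_univ 0) hz (Set.mem_univ t)
end

section
/- Let q ∈ ℂ with 0 < |q| < 1 and let n ∈ ℤ. Then the function t ↦ (t − q^n) · g^{(0,1)}(t,q) / t tends to g^{(0,0)}(q^n, q) as t → q^n with t ∉ q^ℤ ∪ {0}; equivalently, g^{(0,1)}(t,q) has a simple pole at t = q^n with residue of g^{(0,1)}(t,q) dt/(2πit) equal to g^{(0,0)}(q^n,q). -/
open Finset Filter

open Topology

namespace G01

lemma tri_succ (m : ℕ) : (m + 1) * (m + 1 + 1) / 2 = m * (m + 1) / 2 + (m + 1) := by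
  have : (m + 1) * (m + 1 + 1) = m * (m + 1) + (m + 1) * 2 := by ring
  rw [this, Nat.add_mul_div_right _ _ (by norm_num)]

lemma tri_int_two (k : ℤ) : 2 * (k * (k + 1) / 2) = k * (k + 1) :=
  Int.mul_ediv_cancel' (Int.even_mul_succ_self k).two_dvd

lemma tri_int_succ (k : ℤ) : (k + 1) * (k + 1 + 1) / 2 = k * (k + 1) / 2 + k + 1 := by
  have h1 := tri_int_two k
  have h2 := tri_int_two (k + 1)
  linarith

lemma tri_int_neg (k : ℤ) : (-(k + 1)) * (-(k + 1) + 1) / 2 = k * (k + 1) / 2 := by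
  congr 1; ring

lemma tri_cast (m : ℕ) : ((m : ℤ) * (m + 1) / 2) = ((m * (m + 1) / 2 : ℕ) : ℤ) := by
  push_cast; rfl

lemma summable_tri {ρ r : ℝ} (h0 : 0 < ρ) (h1 : ρ < 1) (hr : 0 < r) :
    Summable fun m : ℕ => ρ ^ (m * (m + 1) / 2) * r ^ m := by
  refine summable_of_ratio_test_tendsto_lt_one (l := 0) zero_lt_one
    (Eventually.of_forall fun m => by positivity) ?_
  have : Tendsto (fun m : ℕ => ρ ^ (m + 1) * r) atTop (𝓝 (0 * r)) :=
    (((tendsto_pow_atTop_nhds_zero_of_lt_one h0.le h1).comp (tendsto_add_atTop_nat 1))).mul_const r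
  rw [zero_mul] at this
  refine this.congr fun m => ?_
  rw [Real.norm_of_nonneg (by positivity), Real.norm_of_nonneg (by positivity), tri_succ,
    pow_add ρ (m * (m + 1) / 2) (m + 1), pow_succ r]
  field_simp

lemma summable_tri_int {ρ r : ℝ} (h0 : 0 < ρ) (h1 : ρ < 1) (hr : 0 < r) :
    Summable fun k : ℤ => ρ ^ (k * (k + 1) / 2) * r ^ k := by
  apply Summable.of_nat_of_neg_add_one
  · refine (summable_tri h0 h1 hr).congr fun m => ?_
    rw [tri_cast, zpow_natCast, zpow_natCast]
  · refine ((summable_tri h0 h1 (inv_pos.2 hr)).mul_right r⁻¹).congr fun m => ?_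
    rw [tri_int_neg, tri_cast, zpow_natCast, zpow_neg, ← inv_zpow, zpow_add_one₀ (by positivity),
      zpow_natCast]
    ring

lemma abs_le_two_zpow (k : ℤ) : |(k : ℝ)| ≤ 2 ^ k + 2 ^ (-k) := by
  have key : ∀ m : ℕ, (m : ℝ) ≤ 2 ^ (m : ℤ) := fun m => by
    rw [zpow_natCast]; exact_mod_cast Nat.lt_two_pow_self.le
  rcases Int.eq_nat_or_neg k with ⟨m, rfl | rfl⟩
  · have := key m
    have h2 : (0 : ℝ) < 2 ^ (-(m : ℤ)) := by positivity
    simp only [Int.cast_natCast, Nat.abs_cast]; linarith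
  · have := key m
    have h2 : (0 : ℝ) < 2 ^ (-(m : ℤ)) := by positivity
    simp only [Int.cast_neg, Int.cast_natCast, abs_neg, Nat.abs_cast, neg_neg]; linarith

lemma summable_abs_tri {ρ r : ℝ} (h0 : 0 < ρ) (h1 : ρ < 1) (hr : 0 < r) :
    Summable fun k : ℤ => |(k : ℝ)| * (ρ ^ (k * (k + 1) / 2) * r ^ k) := by
  refine Summable.of_nonneg_of_le (fun k => by positivity) (fun k => ?_)
    ((summable_tri_int h0 h1 (r := 2 * r) (by positivity)).add
      (summable_tri_int h0 h1 (r := 2⁻¹ * r) (by positivity)))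
  rw [mul_zpow, mul_zpow, inv_zpow, ← zpow_neg]
  have := mul_le_mul_of_nonneg_right (abs_le_two_zpow k)
    (show 0 ≤ ρ ^ (k * (k + 1) / 2) * r ^ k by positivity)
  linarith

lemma summable_sq_tri {ρ r : ℝ} (h0 : 0 < ρ) (h1 : ρ < 1) (hr : 0 < r) :
    Summable fun k : ℤ => |(k : ℝ)| * (|(k : ℝ)| * (ρ ^ (k * (k + 1) / 2) * r ^ k)) := by
  refine Summable.of_nonneg_of_le (fun k => by positivity) (fun k => ?_)
    ((summable_abs_tri h0 h1 (r := 2 * r) (by positivity)).add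
      (summable_abs_tri h0 h1 (r := 2⁻¹ * r) (by positivity)))
  rw [mul_zpow, mul_zpow, inv_zpow, ← zpow_neg]
  have := mul_le_mul_of_nonneg_right (abs_le_two_zpow k)
    (show 0 ≤ |(k : ℝ)| * (ρ ^ (k * (k + 1) / 2) * r ^ k) by positivity)
  linarith

/-- zpow on an annulus is bounded by the sum of the values on both ends. -/
lemma zpow_le_ends {a b x : ℝ} (ha : 0 < a) (hax : a ≤ x) (hxb : x ≤ b) (k : ℤ) :
    x ^ k ≤ a ^ k + b ^ k := by
  have hx : 0 < x := ha.trans_le hax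
  have hb : 0 < b := hx.trans_le hxb
  rcases le_total 0 k with hk | hk
  · have := zpow_le_zpow_left₀ hk hx.le hxb
    have h2 : 0 < a ^ k := by positivity
    linarith
  · have h3 := zpow_le_zpow_left₀ (n := -k) (by omega) ha.le hax
    have : x ^ k ≤ a ^ k := by
      rw [zpow_neg, zpow_neg] at h3
      exact (inv_le_inv₀ (by positivity) (by positivity)).1 h3
    have h2 : 0 < b ^ k := by positivity
    linarith

/-- Termwise differentiation of a Laurent series. -/
lemma laurent_hasDerivAt (a : ℤ → ℂ)
    (ha : ∀ r : ℝ, 0 < r → Summable fun k : ℤ => ‖a k‖ * r ^ k)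
    (ha' : ∀ r : ℝ, 0 < r → Summable fun k : ℤ => |(k : ℝ)| * (‖a k‖ * r ^ k))
    (s : ℂ) (hs : s ≠ 0) :
    HasDerivAt (fun z => ∑' k : ℤ, a k * z ^ k) (∑' k : ℤ, a k * (k * s ^ (k - 1))) s := by
  have hns : 0 < ‖s‖ := norm_pos_iff.2 hs
  set A := ‖s‖ / 2 with hA
  set B := 2 * ‖s‖ with hB
  have hApos : 0 < A := by positivity
  have hBpos : 0 < B := by positivity
  have hball : ∀ y ∈ Metric.ball s A, A ≤ ‖y‖ ∧ ‖y‖ ≤ B := by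
    intro y hy
    rw [Metric.mem_ball, dist_eq_norm] at hy
    have h1 := norm_sub_norm_le s y
    have h2 := norm_sub_norm_le y s
    rw [norm_sub_rev] at h1
    constructor <;> linarith
  refine hasDerivAt_tsum_of_isPreconnected (t := Metric.ball s A) (y₀ := s)
    (g' := fun k y => a k * (k * y ^ (k - 1)))
    (u := fun k : ℤ => |(k : ℝ)| * (‖a k‖ * A ^ k) * A⁻¹ + |(k : ℝ)| * (‖a k‖ * B ^ k) * A⁻¹)
    (((ha' A hApos).mul_right _).add ((ha' B hBpos).mul_right _)) Metric.isOpen_ball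
    (convex_ball s A).isPreconnected ?_ ?_ (Metric.mem_ball_self hApos) ?_
    (Metric.mem_ball_self hApos)
  · intro k y hy
    have hy0 : y ≠ 0 := norm_pos_iff.1 (hApos.trans_le (hball y hy).1)
    exact (hasDerivAt_zpow k y (Or.inl hy0)).const_mul _
  · intro k y hy
    obtain ⟨h1, h2⟩ := hball y hy
    have hy0 : y ≠ 0 := norm_pos_iff.1 (hApos.trans_le h1)
    have hyp : 0 < ‖y‖ := norm_pos_iff.2 hy0
    rw [norm_mul, norm_mul, zpow_sub_one₀ hy0, norm_mul, norm_zpow, norm_inv, Complex.norm_intCast]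
    have e1 := zpow_le_ends hApos h1 h2 k
    have e2 : ‖y‖⁻¹ ≤ A⁻¹ := inv_anti₀ hApos h1
    have e3 : ‖y‖ ^ k * ‖y‖⁻¹ ≤ (A ^ k + B ^ k) * A⁻¹ := by gcongr
    have := mul_le_mul_of_nonneg_left e3 (show 0 ≤ |(k : ℝ)| * ‖a k‖ by positivity)
    nlinarith [this]
  · refine Summable.of_norm ((ha ‖s‖ hns).congr fun k => ?_)
    rw [norm_mul, norm_zpow]

end G01

namespace G01

/-- Gaussian binomial coefficients, by the q-Pascal recursion. -/
noncomputable def gb (q : ℂ) : ℕ → ℕ → ℂ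
  | _, 0 => 1
  | 0, _ + 1 => 0
  | n + 1, k + 1 => gb q n k + q ^ (k + 1) * gb q n (k + 1)

lemma gb_zero_right (q : ℂ) (n : ℕ) : gb q n 0 = 1 := by cases n <;> simp [gb]

lemma gb_succ (q : ℂ) (n k : ℕ) : gb q (n + 1) (k + 1) = gb q n k + q ^ (k + 1) * gb q n (k + 1) := by
  rw [gb]

lemma gb_gt (q : ℂ) : ∀ n k : ℕ, n < k → gb q n k = 0
  | 0, 0, h => by omega
  | n + 1, 0, h => by omega
  | 0, k + 1, h => by rw [gb]
  | n + 1, k + 1, h => by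
    rw [gb_succ, gb_gt q n k (by omega), gb_gt q n (k + 1) (by omega)]; simp

lemma qPoch_succ (q : ℂ) (k : ℕ) : qPoch q q (k + 1) = qPoch q q k * (1 - q ^ (k + 1)) := by
  rw [qPoch, prod_range_succ, ← qPoch, pow_succ']

lemma gb_mul (q : ℂ) : ∀ n i j : ℕ, i + j = n →
    gb q n i * (qPoch q q i * qPoch q q j) = qPoch q q n := by
  intro n
  induction n with
  | zero =>
    intro i j h
    obtain rfl : i = 0 := by omega
    obtain rfl : j = 0 := by omega
    simp [gb, qPoch]
  | succ n ih =>
    intro i j h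
    rcases i with _ | i
    · obtain rfl : j = n + 1 := by omega
      simp [gb_zero_right, qPoch]
    · rcases j with _ | j
      · obtain rfl : i = n := by omega
        have := ih i 0 (by omega)
        rw [gb_succ, gb_gt q i (i + 1) (by omega), qPoch_succ]
        linear_combination (1 - q ^ (i + 1)) * this
      · have h1 := ih i (j + 1) (by omega)
        have h2 := ih (i + 1) j (by omega)
        obtain rfl : n = i + j + 1 := by omega
        rw [gb_succ, qPoch_succ q (i + j + 1)]
        rw [qPoch_succ q i] at h2 ⊢
        rw [qPoch_succ q j] at h1 ⊢
        have e : q ^ (i + j + 1 + 1) = q ^ (i + 1) * q ^ (j + 1) := by ring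
        rw [e]
        linear_combination (1 - q ^ (i + 1)) * h1 + q ^ (i + 1) * (1 - q ^ (j + 1)) * h2

/-- The finite q-binomial theorem. -/
lemma q_binomial (q : ℂ) (M : ℕ) : ∀ x : ℂ, ∏ j ∈ range M, (1 + x * q ^ j) =
    ∑ i ∈ range (M + 1), q ^ (i * (i - 1) / 2) * gb q M i * x ^ i := by
  induction M with
  | zero => intro x; simp [gb]
  | succ M ih =>
    intro x
    have hprod : ∏ j ∈ range (M + 1), (1 + x * q ^ j) =
        (1 + x) * ∏ j ∈ range M, (1 + (q * x) * q ^ j) := by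
      rw [prod_range_succ', mul_comm]
      congr 1
      · simp
      · refine prod_congr rfl fun j _ => ?_
        ring
    rw [hprod, ih]
    have hA : ∑ i ∈ range (M + 1), q ^ (i * (i - 1) / 2) * gb q M i * (q * x) ^ i =
        ∑ i ∈ range (M + 1), q ^ ((i + 1) * i / 2) * (q ^ (i + 1) * gb q M (i + 1)) * x ^ (i + 1)
          + 1 := by
      have := sum_range_succ (fun i => q ^ (i * (i - 1) / 2) * gb q M i * (q * x) ^ i) (M + 1)
      rw [gb_gt q M (M + 1) (by omega)] at this
      simp only [mul_zero, zero_mul, add_zero] at this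
      rw [← this, sum_range_succ']
      congr 1
      · refine sum_congr rfl fun i _ => ?_
        simp only [Nat.add_sub_cancel]
        ring
      · simp [gb_zero_right]
    have hB : x * ∑ i ∈ range (M + 1), q ^ (i * (i - 1) / 2) * gb q M i * (q * x) ^ i =
        ∑ i ∈ range (M + 1), q ^ ((i + 1) * i / 2) * gb q M i * x ^ (i + 1) := by
      rw [mul_sum]
      refine sum_congr rfl fun i _ => ?_
      have : (i + 1) * i / 2 = i * (i - 1) / 2 + i := by
        rcases i with _ | i
        · simp
        · simp only [Nat.add_sub_cancel]
          rw [mul_comm (i + 1) i, mul_comm (i + 1 + 1), tri_succ]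
      rw [this, pow_add]; ring
    rw [add_mul, one_mul, hB, hA, sum_range_succ' _ (M + 1), add_right_comm, ← sum_add_distrib]
    congr 1
    · refine sum_congr rfl fun i _ => ?_
      rw [gb_succ]
      simp only [Nat.add_sub_cancel]
      ring
    · simp [gb_zero_right]


lemma one_sub_pow_ne {q : ℂ} (hq1 : ‖q‖ < 1) (j : ℕ) : 1 - q ^ (j + 1) ≠ 0 := by
  intro h
  have : ‖q ^ (j + 1)‖ < 1 := by
    rw [norm_pow]; exact pow_lt_one₀ (norm_nonneg _) hq1 (by omega)
  rw [← sub_eq_zero.1 h] at this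
  simp at this

lemma qPoch_ne {q : ℂ} (hq1 : ‖q‖ < 1) (k : ℕ) : qPoch q q k ≠ 0 := by
  rw [qPoch]
  refine prod_ne_zero_iff.2 fun j _ => ?_
  rw [← pow_succ']; exact one_sub_pow_ne hq1 j

lemma qPoch_tendsto {q : ℂ} (hq1 : ‖q‖ < 1) : ∃ L : ℂ, L ≠ 0 ∧ Tendsto (fun k => qPoch q q k) atTop (𝓝 L) := by
  refine ⟨∏' n : ℕ, (1 - q ^ (n + 1)), ?_, ?_⟩
  · have hs : Summable fun n : ℕ => ‖-q ^ (n + 1)‖ := by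
      simpa using (summable_nat_add_iff 1).mpr (summable_geometric_of_lt_one (norm_nonneg _) hq1)
    have := tprod_one_add_ne_zero_of_summable (f := fun n : ℕ => -q ^ (n + 1))
      (fun i => by simpa [sub_eq_add_neg] using one_sub_pow_ne hq1 i) hs
    simpa [sub_eq_add_neg] using this
  · refine (ModularForm.multipliable_one_sub_pow hq1).tendsto_prod_tprod_nat.congr fun n => ?_
    rw [qPoch]
    exact prod_congr rfl fun j _ => by rw [pow_succ']

lemma qPoch_bounds {q : ℂ} (hq1 : ‖q‖ < 1) : ∃ C : ℝ, 0 < C ∧ ∀ k, ‖qPoch q q k‖ ≤ C ∧ ‖(qPoch q q k)⁻¹‖ ≤ C := by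
  obtain ⟨L, hL, hT⟩ := qPoch_tendsto hq1
  obtain ⟨C1, h1⟩ := (Metric.isBounded_range_of_tendsto _ hT).exists_norm_le
  obtain ⟨C2, h2⟩ := (Metric.isBounded_range_of_tendsto _ (hT.inv₀ hL)).exists_norm_le
  refine ⟨max 1 (max C1 C2), by positivity, fun k => ⟨?_, ?_⟩⟩
  · exact (h1 _ ⟨k, rfl⟩).trans ((le_max_left _ _).trans (le_max_right _ _))
  · exact (h2 _ ⟨k, rfl⟩).trans ((le_max_right _ _).trans (le_max_right _ _))

lemma gb_eq {q : ℂ} (hq1 : ‖q‖ < 1) (i j : ℕ) :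
    gb q (i + j) i = qPoch q q (i + j) * ((qPoch q q i)⁻¹ * (qPoch q q j)⁻¹) := by
  have := gb_mul q (i + j) i j rfl
  have h1 := qPoch_ne hq1 i
  have h2 := qPoch_ne hq1 j
  rw [← this]; field_simp

lemma gb_bound {q : ℂ} (hq1 : ‖q‖ < 1) : ∃ C : ℝ, 0 < C ∧ ∀ n i, ‖gb q n i‖ ≤ C := by
  obtain ⟨C, hC, h⟩ := qPoch_bounds hq1
  refine ⟨C * (C * C), by positivity, fun n i => ?_⟩
  rcases lt_or_ge n i with hn | hn
  · rw [gb_gt q n i hn, norm_zero]; positivity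
  · obtain ⟨j, rfl⟩ := Nat.exists_eq_add_of_le hn
    rw [gb_eq hq1, norm_mul, norm_mul]
    gcongr
    exacts [(h _).1, (h _).2, (h _).2]


/-- The derivative at `1` of the finite triple product. -/
lemma finite_deriv {q : ℂ} (hq0 : 0 < ‖q‖) (hq1 : ‖q‖ < 1) (N : ℕ) :
    ∑ i ∈ range (2 * N + 1 + 1), (-1 : ℂ) ^ i * q ^ (((i : ℤ) - N - 1) * ((i : ℤ) - N - 1 + 1) / 2)
      * ((i : ℂ) - N - 1) * gb q (2 * N + 1) i = (-1) ^ (N + 1) * qPoch q q N ^ 2 := by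
  have hq : q ≠ 0 := norm_pos_iff.1 hq0
  have hexp : ∀ i : ℕ, q ^ (((i : ℤ) - N - 1) * ((i : ℤ) - N - 1 + 1) / 2) =
      q ^ (N * (N + 1) / 2) * (q ^ (i * (i - 1) / 2) * (q ^ (-(N : ℤ))) ^ i) := by
    intro i
    rw [← zpow_natCast, ← zpow_natCast q, ← zpow_natCast, ← zpow_mul, ← zpow_add₀ hq,
      ← zpow_add₀ hq]
    congr 1
    rw [← tri_cast]
    have e : ((i * (i - 1) / 2 : ℕ) : ℤ) * 2 = i * (i - 1) := by
      rcases i with _ | i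
      · simp
      · have := tri_int_two i
        rw [Nat.add_sub_cancel, mul_comm (i + 1) i, ← tri_cast]
        push_cast; linarith
    have h1 := tri_int_two ((i : ℤ) - N - 1)
    have h2 := tri_int_two N
    nlinarith
  set R : ℂ → ℂ := fun s => (∏ j ∈ range N, (1 + -s * q ^ (-(N : ℤ)) * q ^ j)) *
    ∏ j ∈ range N, (1 + -s * q ^ (-(N : ℤ)) * q ^ (N + 1 + j)) with hR
  have hF : ∀ s : ℂ, (1 - s) * R s = ∑ i ∈ range (2 * N + 1 + 1),
      (-1 : ℂ) ^ i * (q ^ (i * (i - 1) / 2) * (q ^ (-(N : ℤ))) ^ i) * gb q (2 * N + 1) i * s ^ i := by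
    intro s
    have := q_binomial q (2 * N + 1) (-s * q ^ (-(N : ℤ)))
    rw [show 2 * N + 1 = N + 1 + N by ring, prod_range_add, prod_range_succ] at this
    have h1 : 1 + -s * q ^ (-(N : ℤ)) * q ^ N = 1 - s := by
      rw [zpow_neg, zpow_natCast]; field_simp; ring
    rw [h1] at this
    rw [show 2 * N + 1 = N + 1 + N by ring]
    calc _ = _ := by rw [hR]; ring
      _ = _ := this
      _ = _ := by
        refine sum_congr rfl fun i _ => ?_
        rw [mul_pow, neg_pow]; ring
  have hRd : DifferentiableAt ℂ R 1 := by rw [hR]; fun_prop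
  have hd1 : HasDerivAt (fun s => (1 - s) * R s) (-R 1) 1 := by
    have := ((hasDerivAt_id (1 : ℂ)).const_sub 1).mul hRd.hasDerivAt
    convert! this using 1
    simp
  have hd2 : HasDerivAt (fun s => (1 - s) * R s) (∑ i ∈ range (2 * N + 1 + 1),
      (-1 : ℂ) ^ i * (q ^ (i * (i - 1) / 2) * (q ^ (-(N : ℤ))) ^ i) * gb q (2 * N + 1) i * i) 1 := by
    simp_rw [hF]
    refine HasDerivAt.fun_sum fun i _ => ?_
    have := (hasDerivAt_pow i (1 : ℂ)).const_mul
      ((-1 : ℂ) ^ i * (q ^ (i * (i - 1) / 2) * (q ^ (-(N : ℤ))) ^ i) * gb q (2 * N + 1) i)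
    simpa using this
  have hD := hd2.unique hd1
  have hZ := hF 1
  have hR1 : q ^ (N * (N + 1) / 2) * R 1 = (-1) ^ N * qPoch q q N ^ 2 := by
    have a1 : ∏ j ∈ range N, (1 + -1 * q ^ (-(N : ℤ)) * q ^ (N + 1 + j)) = qPoch q q N := by
      rw [qPoch]
      refine prod_congr rfl fun j _ => ?_
      rw [zpow_neg, zpow_natCast, pow_add, pow_succ]; field_simp; ring
    have a2 : ∏ j ∈ range N, (1 + -1 * q ^ (-(N : ℤ)) * q ^ j) =
        ∏ j ∈ range N, (1 - (q ^ (j + 1))⁻¹) := by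
      rw [← prod_range_reflect]
      refine prod_congr rfl fun j hj => ?_
      have hj' := mem_range.1 hj
      obtain ⟨m, rfl⟩ := Nat.exists_eq_add_of_lt hj'
      rw [show j + m + 1 - 1 - j = m by omega, zpow_neg, zpow_natCast,
        show j + m + 1 = (j + 1) + m by ring, pow_add q (j + 1) m]
      field_simp; ring
    have a3 : ∀ K : ℕ, q ^ (K * (K + 1) / 2) * ∏ j ∈ range K, (1 - (q ^ (j + 1))⁻¹) =
        (-1) ^ K * qPoch q q K := by
      intro K
      induction K with
      | zero => simp [qPoch]
      | succ K ih =>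
        have e : q ^ (K + 1) * (1 - (q ^ (K + 1))⁻¹) = -(1 - q ^ (K + 1)) := by
          field_simp; ring
        rw [tri_succ, pow_add q (K * (K + 1) / 2) (K + 1), prod_range_succ, qPoch_succ,
          pow_succ (-1 : ℂ)]
        linear_combination (q ^ (K + 1) * (1 - (q ^ (K + 1))⁻¹)) * ih + (-1) ^ K * qPoch q q K * e
    have := a3 N
    simp only [hR]
    rw [a1, a2, ← mul_assoc, this]; ring
  have hsplit : ∑ i ∈ range (2 * N + 1 + 1), (-1 : ℂ) ^ i *
      q ^ (((i : ℤ) - N - 1) * ((i : ℤ) - N - 1 + 1) / 2)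
      * ((i : ℂ) - N - 1) * gb q (2 * N + 1) i =
      q ^ (N * (N + 1) / 2) * (-R 1) - q ^ (N * (N + 1) / 2) * (N + 1) * ((1 - 1) * R 1) := by
    rw [hZ, ← hD, mul_sum, mul_sum, ← sum_sub_distrib]
    refine sum_congr rfl fun i _ => ?_
    rw [hexp]; ring
  rw [hsplit, pow_succ]
  linear_combination -hR1


end G01

namespace G01


lemma norm_coef {q : ℂ} (hq0 : 0 < ‖q‖) (hq1 : ‖q‖ < 1) (k : ℤ) : ‖(-1 : ℂ) ^ k * q ^ (k * (k + 1) / 2)‖ = ‖q‖ ^ (k * (k + 1) / 2) := by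
  rw [norm_mul, norm_zpow, norm_zpow, norm_neg, norm_one, one_zpow, one_mul]

lemma norm_coefD {q : ℂ} (hq0 : 0 < ‖q‖) (hq1 : ‖q‖ < 1) (k : ℤ) : ‖(-1 : ℂ) ^ k * (k : ℂ) * q ^ (k * (k + 1) / 2)‖ =
    |(k : ℝ)| * ‖q‖ ^ (k * (k + 1) / 2) := by
  rw [norm_mul, norm_mul, norm_zpow, norm_zpow, norm_neg, norm_one, one_zpow, one_mul,
    Complex.norm_intCast]

lemma summable_theta {q : ℂ} (hq0 : 0 < ‖q‖) (hq1 : ‖q‖ < 1) {s : ℂ} (hs : s ≠ 0) :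
    Summable fun k : ℤ => (-1 : ℂ) ^ k * q ^ (k * (k + 1) / 2) * s ^ k := by
  refine Summable.of_norm ((summable_tri_int hq0 hq1 (norm_pos_iff.2 hs)).congr fun k => ?_)
  rw [norm_mul, norm_coef hq0 hq1, norm_zpow]

lemma summable_thetaD {q : ℂ} (hq0 : 0 < ‖q‖) (hq1 : ‖q‖ < 1) {s : ℂ} (hs : s ≠ 0) :
    Summable fun k : ℤ => (-1 : ℂ) ^ k * (k : ℂ) * q ^ (k * (k + 1) / 2) * s ^ k := by
  refine Summable.of_norm ((summable_abs_tri hq0 hq1 (norm_pos_iff.2 hs)).congr fun k => ?_)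
  rw [norm_mul, norm_coefD hq0 hq1, norm_zpow, mul_assoc]

lemma theta_hasDerivAt {q : ℂ} (hq0 : 0 < ‖q‖) (hq1 : ‖q‖ < 1) {s : ℂ} (hs : s ≠ 0) :
    HasDerivAt (fun z => jtheta z q) (jthetaD s q / s) s := by
  have := laurent_hasDerivAt (fun k : ℤ => (-1 : ℂ) ^ k * q ^ (k * (k + 1) / 2))
    (fun r hr => (summable_tri_int hq0 hq1 hr).congr fun k => by rw [norm_coef hq0 hq1])
    (fun r hr => (summable_abs_tri hq0 hq1 hr).congr fun k => by rw [norm_coef hq0 hq1]) s hs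
  convert! this using 1
  rw [jthetaD, ← tsum_div_const]
  refine tsum_congr fun k => ?_
  rw [zpow_sub_one₀ hs]; ring

lemma thetaD_continuousAt {q : ℂ} (hq0 : 0 < ‖q‖) (hq1 : ‖q‖ < 1) {s : ℂ} (hs : s ≠ 0) : ContinuousAt (fun z => jthetaD z q) s :=
  (laurent_hasDerivAt (fun k : ℤ => (-1 : ℂ) ^ k * (k : ℂ) * q ^ (k * (k + 1) / 2))
    (fun r hr => (summable_abs_tri hq0 hq1 hr).congr fun k => by
      rw [norm_coefD hq0 hq1, mul_assoc])
    (fun r hr => (summable_sq_tri hq0 hq1 hr).congr fun k => by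
      rw [norm_coefD hq0 hq1, mul_assoc]) s hs).continuousAt

lemma theta_one {q : ℂ} (hq0 : 0 < ‖q‖) (hq1 : ‖q‖ < 1) : jtheta 1 q = 0 := by
  have h : jtheta 1 q = -jtheta 1 q := by
    conv_lhs => rw [jtheta]
    rw [jtheta, ← tsum_neg, ← (Equiv.subLeft (-1 : ℤ)).tsum_eq]
    refine tsum_congr fun k => ?_
    simp only [Equiv.subLeft_apply, one_zpow, mul_one]
    rw [show (-1 - k : ℤ) = -(k + 1) by ring, tri_int_neg, zpow_neg, ← inv_zpow,
      zpow_add_one₀ (by norm_num)]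
    norm_num
  exact self_eq_neg.1 h

lemma theta_shift {q : ℂ} (hq0 : 0 < ‖q‖) (hq1 : ‖q‖ < 1) {s : ℂ} (hs : s ≠ 0) : jtheta (q * s) q = -(q * s)⁻¹ * jtheta s q := by
  have hq : q ≠ 0 := norm_pos_iff.1 hq0
  rw [jtheta, jtheta, ← tsum_mul_left, ← (Equiv.addRight (1 : ℤ)).tsum_eq
    (fun k : ℤ => -(q * s)⁻¹ * ((-1 : ℂ) ^ k * q ^ (k * (k + 1) / 2) * s ^ k))]
  refine tsum_congr fun k => ?_
  simp only [Equiv.coe_addRight]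
  rw [tri_int_succ, zpow_add_one₀ hq, zpow_add₀ hq, zpow_add_one₀ hs,
    zpow_add_one₀ (by norm_num), mul_zpow]
  field_simp

lemma thetaD_shift {q : ℂ} (hq0 : 0 < ‖q‖) (hq1 : ‖q‖ < 1) {s : ℂ} (hs : s ≠ 0) :
    jthetaD (q * s) q = -(q * s)⁻¹ * (jthetaD s q - jtheta s q) := by
  have hq : q ≠ 0 := norm_pos_iff.1 hq0
  rw [jthetaD, jthetaD, jtheta, ← (summable_thetaD hq0 hq1 hs).tsum_sub (summable_theta hq0 hq1 hs),
    ← tsum_mul_left, ← (Equiv.addRight (1 : ℤ)).tsum_eq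
    (fun k : ℤ => -(q * s)⁻¹ * ((-1 : ℂ) ^ k * (k : ℂ) * q ^ (k * (k + 1) / 2) * s ^ k -
      (-1 : ℂ) ^ k * q ^ (k * (k + 1) / 2) * s ^ k))]
  refine tsum_congr fun k => ?_
  simp only [Equiv.coe_addRight]
  rw [tri_int_succ, zpow_add_one₀ hq, zpow_add₀ hq, zpow_add_one₀ hs,
    zpow_add_one₀ (by norm_num), mul_zpow]
  push_cast
  field_simp
  ring

lemma thetaD_one_ne {q : ℂ} (hq0 : 0 < ‖q‖) (hq1 : ‖q‖ < 1) : jthetaD 1 q ≠ 0 := by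
  have hq : q ≠ 0 := norm_pos_iff.1 hq0
  obtain ⟨L, hL, hT⟩ := qPoch_tendsto hq1
  obtain ⟨C, hC, hgb⟩ := gb_bound hq1
  -- the truncated sums
  let W : ℕ → ℤ → ℂ := fun N k =>
    if 0 ≤ k + N + 1 then gb q (2 * N + 1) (k + N + 1).toNat else 0
  let a : ℤ → ℂ := fun k => (-1 : ℂ) ^ k * (k : ℂ) * q ^ (k * (k + 1) / 2)
  have hlim : Tendsto (fun N : ℕ => ∑' k : ℤ, a k * W N k) atTop (𝓝 (∑' k : ℤ, a k * L⁻¹)) := by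
    refine tendsto_tsum_of_dominated_convergence
      (bound := fun k : ℤ => |(k : ℝ)| * (‖q‖ ^ (k * (k + 1) / 2) * 1 ^ k) * C)
      ((summable_abs_tri hq0 hq1 one_pos).mul_right C) ?_ ?_
    · intro k
      refine Tendsto.const_mul _ ?_
      have e1 : Tendsto (fun N : ℕ => 2 * N + 1) atTop atTop :=
        tendsto_atTop_mono (fun N => by simp only [id]; omega) tendsto_id
      have e2 : Tendsto (fun N : ℕ => (k + N + 1).toNat) atTop atTop := by
        refine tendsto_atTop.2 fun b => ?_
        filter_upwards [eventually_ge_atTop (b + k.natAbs)] with N hN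
        omega
      have e3 : Tendsto (fun N : ℕ => (N - k).toNat) atTop atTop := by
        refine tendsto_atTop.2 fun b => ?_
        filter_upwards [eventually_ge_atTop (b + k.natAbs)] with N hN
        omega
      have := (hT.comp e1).mul (((hT.comp e2).inv₀ hL).mul ((hT.comp e3).inv₀ hL))
      rw [mul_inv_cancel_left₀ hL] at this
      refine this.congr' ?_
      filter_upwards [eventually_ge_atTop k.natAbs] with N hN
      have hpos : 0 ≤ k + N + 1 := by omega
      simp only [W, if_pos hpos, Function.comp]
      have hs : 2 * N + 1 = (k + N + 1).toNat + (N - k).toNat := by omega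
      rw [hs, gb_eq hq1]
    · refine Eventually.of_forall fun N k => ?_
      rw [norm_mul, norm_coefD hq0 hq1, one_zpow, mul_one]
      refine mul_le_mul_of_nonneg_left ?_ (by positivity)
      simp only [W]
      split_ifs
      · exact hgb _ _
      · simpa using hC.le
  have hfin : ∀ N : ℕ, ∑' k : ℤ, a k * W N k = qPoch q q N ^ 2 := by
    intro N
    have h1 := finite_deriv hq0 hq1 N
    have hinj : Function.Injective (fun i : ℕ => (i : ℤ) - N - 1) := fun x y h => by
      simp only at h; omega
    have h2 : ∑' k : ℤ, a k * W N k = ∑' i : ℕ, a ((i : ℤ) - N - 1) * W N ((i : ℤ) - N - 1) := by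
      refine (hinj.tsum_eq (f := fun k => a k * W N k) ?_).symm
      intro k hk
      by_contra hc
      apply hk
      have : ¬ 0 ≤ k + N + 1 := fun h0 => hc ⟨(k + N + 1).toNat, by simp only; omega⟩
      simp only [W, if_neg this, mul_zero]
    rw [h2, tsum_eq_sum (s := range (2 * N + 1 + 1))]
    · have hm : ((-1 : ℂ) ^ (N + 1)) * (-1) ^ (N + 1) = 1 := by
        rw [← mul_pow]; norm_num
      have : qPoch q q N ^ 2 = (-1) ^ (N + 1) * ((-1) ^ (N + 1) * qPoch q q N ^ 2) := by
        rw [← mul_assoc, hm, one_mul]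
      rw [this, ← h1, mul_sum]
      refine sum_congr rfl fun i _ => ?_
      have hz : (0 : ℤ) ≤ (i : ℤ) - N - 1 + N + 1 := by omega
      have hz' : ((i : ℤ) - N - 1 + N + 1).toNat = i := by omega
      simp only [W, a, if_pos hz, hz']
      have hsgn : (-1 : ℂ) ^ ((i : ℤ) - N - 1) = (-1) ^ (N + 1) * (-1) ^ i := by
        rw [show (i : ℤ) - N - 1 = i - ((N + 1 : ℕ) : ℤ) by push_cast; ring,
          zpow_sub₀ (by norm_num), zpow_natCast, zpow_natCast, div_eq_iff (by simp)]
        linear_combination -(-1 : ℂ) ^ i * hm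
      rw [hsgn]
      push_cast
      ring
    · intro i hi
      have hi' : 2 * N + 1 < i := by
        by_contra h; exact hi (mem_range.2 (by omega))
      have hz : (0 : ℤ) ≤ (i : ℤ) - N - 1 + N + 1 := by omega
      have hz' : ((i : ℤ) - N - 1 + N + 1).toNat = i := by omega
      simp only [W, if_pos hz, hz', gb_gt q _ _ hi', mul_zero]
  simp_rw [hfin] at hlim
  have hu := tendsto_nhds_unique hlim (hT.pow 2)
  rw [tsum_mul_right] at hu
  intro h0
  have : ∑' k : ℤ, a k = 0 := by
    rw [← h0, jthetaD]
    exact tsum_congr fun k => by simp [a]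
  rw [this, zero_mul] at hu
  exact pow_ne_zero 2 hL hu.symm

lemma theta_zeros {q : ℂ} (hq0 : 0 < ‖q‖) (hq1 : ‖q‖ < 1) (n : ℤ) : jtheta (q ^ n) q = 0 ∧ jthetaD (q ^ n) q ≠ 0 := by
  have hq : q ≠ 0 := norm_pos_iff.1 hq0
  have step : ∀ m : ℤ, (jtheta (q ^ (m + 1)) q = 0 ∧ jthetaD (q ^ (m + 1)) q ≠ 0) ↔
      (jtheta (q ^ m) q = 0 ∧ jthetaD (q ^ m) q ≠ 0) := by
    intro m
    have hm : q ^ m ≠ 0 := zpow_ne_zero _ hq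
    have hne : -(q * q ^ m)⁻¹ ≠ 0 := neg_ne_zero.2 (inv_ne_zero (mul_ne_zero hq hm))
    rw [zpow_add_one₀ hq, mul_comm (q ^ m) q, theta_shift hq0 hq1 hm, thetaD_shift hq0 hq1 hm]
    constructor
    · rintro ⟨h1, h2⟩
      have h3 : jtheta (q ^ m) q = 0 := (mul_eq_zero.1 h1).resolve_left hne
      refine ⟨h3, fun h => h2 ?_⟩
      rw [h, h3]; simp
    · rintro ⟨h1, h2⟩
      rw [h1, sub_zero, mul_zero]
      exact ⟨rfl, mul_ne_zero hne h2⟩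
  induction n using Int.induction_on with
  | zero => rw [zpow_zero]; exact ⟨theta_one hq0 hq1, thetaD_one_ne hq0 hq1⟩
  | succ i ih => exact (step _).2 ih
  | pred i ih =>
    have := step (-(i : ℤ) - 1)
    rw [sub_add_cancel] at this
    exact this.1 ih

lemma logDeriv_limit {q : ℂ} (hq0 : 0 < ‖q‖) (hq1 : ‖q‖ < 1) (n : ℤ) : Tendsto
    (fun t : ℂ => (t - q ^ n) * (jthetaD t⁻¹ q / jtheta t⁻¹ q) / t) (𝓝[≠] (q ^ n)) (𝓝 (-1)) := by
  have hq : q ≠ 0 := norm_pos_iff.1 hq0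
  set t₀ := q ^ n with ht₀
  have h0 : t₀ ≠ 0 := zpow_ne_zero _ hq
  have hinv : t₀⁻¹ = q ^ (-n) := by rw [ht₀, zpow_neg]
  obtain ⟨hz, hD⟩ := theta_zeros hq0 hq1 (-n)
  rw [← hinv] at hz hD
  have hder : HasDerivAt (fun t => jtheta t⁻¹ q) (jthetaD t₀⁻¹ q / t₀⁻¹ * -(t₀ ^ 2)⁻¹) t₀ :=
    HasDerivAt.comp t₀ (h₂ := fun z => jtheta z q) (theta_hasDerivAt hq0 hq1 (inv_ne_zero h0))
      (hasDerivAt_inv h0)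
  have hsl := hder.tendsto_slope
  have hne : jthetaD t₀⁻¹ q / t₀⁻¹ * -(t₀ ^ 2)⁻¹ ≠ 0 := by
    refine mul_ne_zero (div_ne_zero hD (inv_ne_zero h0)) (neg_ne_zero.2 (inv_ne_zero (pow_ne_zero 2 h0)))
  have hc : Tendsto (fun t => jthetaD t⁻¹ q) (𝓝[≠] t₀) (𝓝 (jthetaD t₀⁻¹ q)) :=
    ((ContinuousAt.comp (g := fun z => jthetaD z q) (thetaD_continuousAt hq0 hq1 (inv_ne_zero h0))
      (continuousAt_inv₀ h0)).tendsto).mono_left nhdsWithin_le_nhds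
  have hid : Tendsto (fun t : ℂ => t) (𝓝[≠] t₀) (𝓝 t₀) := tendsto_id.mono_left nhdsWithin_le_nhds
  have hfull := ((hsl.inv₀ hne).mul hc).div hid h0
  have hval : (jthetaD t₀⁻¹ q / t₀⁻¹ * -(t₀ ^ 2)⁻¹)⁻¹ * jthetaD t₀⁻¹ q / t₀ = -1 := by
    generalize jthetaD t₀⁻¹ q = d at hD
    field_simp
  rw [hval] at hfull
  refine hfull.congr fun t => ?_
  simp only [slope_def_field, hz, sub_zero, Pi.div_apply]
  rw [inv_div]; ring


lemma series_continuous {ρ K M : ℝ} (h0 : 0 < ρ) (h1 : ρ < 1) (hM : 0 < M) (c : ℕ → ℂ)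
    (hc : ∀ k, ‖c k‖ ≤ K * (ρ ^ (k * (k + 1) / 2) * M ^ k)) {t₀ : ℂ} (ht : t₀ ≠ 0) :
    (∀ t : ℂ, t ≠ 0 → Summable fun k : ℕ => c k * t ^ (-1 - (k : ℤ))) ∧
    Tendsto (fun t : ℂ => ∑' k : ℕ, c k * t ^ (-1 - (k : ℤ))) (𝓝 t₀)
      (𝓝 (∑' k : ℕ, c k * t₀ ^ (-1 - (k : ℤ)))) := by
  have hzp : ∀ (x : ℝ) (k : ℕ), 0 < x → x ^ (-1 - (k : ℤ)) = x⁻¹ * x⁻¹ ^ k := fun x k hx => by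
    rw [zpow_sub₀ hx.ne', zpow_natCast, zpow_neg_one, inv_pow]; rfl
  have hb : ∀ a : ℝ, 0 < a → ∀ t : ℂ, a ≤ ‖t‖ → ∀ k : ℕ, ‖c k * t ^ (-1 - (k : ℤ))‖ ≤
      K * a⁻¹ * (ρ ^ (k * (k + 1) / 2) * (M * a⁻¹) ^ k) := by
    intro a ha t hat k
    rw [norm_mul, norm_zpow, hzp _ _ (ha.trans_le hat)]
    have e : ‖t‖⁻¹ ≤ a⁻¹ := inv_anti₀ ha hat
    have e2 : ‖t‖⁻¹ * ‖t‖⁻¹ ^ k ≤ a⁻¹ * a⁻¹ ^ k := by gcongr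
    calc _ ≤ K * (ρ ^ (k * (k + 1) / 2) * M ^ k) * (a⁻¹ * a⁻¹ ^ k) := by
          refine mul_le_mul (hc k) e2 (by positivity) ((norm_nonneg _).trans (hc k))
      _ = _ := by rw [mul_pow]; ring
  refine ⟨fun t htt => ?_, ?_⟩
  · have hp : 0 < ‖t‖ := norm_pos_iff.2 htt
    exact Summable.of_norm_bounded
      ((summable_tri h0 h1 (r := M * ‖t‖⁻¹) (by positivity)).mul_left _) (hb ‖t‖ hp t le_rfl)
  · have hp : 0 < ‖t₀‖ / 2 := by have := norm_pos_iff.2 ht; positivity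
    refine tendsto_tsum_of_dominated_convergence
      ((summable_tri h0 h1 (r := M * (‖t₀‖ / 2)⁻¹) (by positivity)).mul_left (K * (‖t₀‖ / 2)⁻¹)) ?_ ?_
    · intro k
      exact (continuousAt_zpow₀ t₀ _ (Or.inl ht)).tendsto.const_mul _
    · have : ∀ᶠ t : ℂ in 𝓝 t₀, ‖t₀‖ / 2 < ‖t‖ :=
        continuous_norm.continuousAt.eventually_const_lt (by linarith)
      filter_upwards [this] with t htt k using hb _ hp t htt.le k

end G01

/-- `g^{(0,1)}(t,q)` has a simple pole at `t = q^n` with residue (of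
`g^{(0,1)}(t,q) dt/(2πit)`) equal to `g^{(0,0)}(q^n, q)`. -/
theorem g01_residue
    (q : ℂ) (hq0 : 0 < ‖q‖) (hq1 : ‖q‖ < 1) (n : ℤ) :
    Tendsto (fun t : ℂ => (t - q ^ n) * g01 t q / t)
      (nhdsWithin (q ^ n) {t : ℂ | t ≠ 0 ∧ ∀ m : ℤ, t ≠ q ^ m})
      (nhds (g00 (q ^ n) q)) := by
  have hq : q ≠ 0 := norm_pos_iff.1 hq0
  set t₀ := q ^ n with ht₀
  have h0 : t₀ ≠ 0 := zpow_ne_zero _ hq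
  obtain ⟨C, hC, hP⟩ := G01.qPoch_bounds hq1
  let c : ℕ → ℂ := fun k => (-1 : ℂ) ^ k * q ^ (k * (k + 1) / 2) / (qPoch q q k) ^ 2
  let S : ℕ → ℂ := fun k => ∑ j ∈ Finset.range k, (1 + q ^ (j + 1)) / (1 - q ^ (j + 1))
  have hcb : ∀ k, ‖c k‖ ≤ C ^ 2 * ‖q‖ ^ (k * (k + 1) / 2) := by
    intro k
    have h1 := (hP k).2
    simp only [c]
    rw [div_eq_mul_inv, ← inv_pow, norm_mul, norm_mul, norm_pow, norm_pow, norm_pow, norm_neg,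
      norm_one, one_pow, one_mul, mul_comm]
    gcongr
  have hd : 0 < 1 - ‖q‖ := by linarith
  have hSb : ∀ k, ‖S k‖ ≤ 2 / (1 - ‖q‖) * 2 ^ k := by
    intro k
    have hterm : ∀ j : ℕ, ‖(1 + q ^ (j + 1)) / (1 - q ^ (j + 1))‖ ≤ 2 / (1 - ‖q‖) := by
      intro j
      have hp : ‖q ^ (j + 1)‖ ≤ ‖q‖ := by
        rw [norm_pow]; exact pow_le_of_le_one (norm_nonneg _) hq1.le (by omega)
      rw [norm_div]
      have a1 := norm_add_le (1 : ℂ) (q ^ (j + 1))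
      have a2 := norm_sub_norm_le (1 : ℂ) (q ^ (j + 1))
      rw [norm_one] at a1 a2
      exact div_le_div₀ (by norm_num) (by linarith) hd (by linarith)
    have h1 : ‖S k‖ ≤ k * (2 / (1 - ‖q‖)) := by
      refine (norm_sum_le_of_le _ fun j _ => hterm j).trans ?_
      simp
    have h2 : (k : ℝ) ≤ 2 ^ k := by exact_mod_cast Nat.lt_two_pow_self.le
    have h3 : (0 : ℝ) ≤ 2 / (1 - ‖q‖) := by positivity
    nlinarith
  obtain ⟨hs1, hl1⟩ := G01.series_continuous (K := C ^ 2) (M := 1) hq0 hq1 one_pos c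
    (fun k => by simpa using hcb k) h0
  obtain ⟨hs2, hl2⟩ := G01.series_continuous (K := 2 / (1 - ‖q‖) * C ^ 2) (M := 2) hq0 hq1 two_pos
    (fun k => S k * c k) (fun k => by
      rw [norm_mul]
      calc _ ≤ (2 / (1 - ‖q‖) * 2 ^ k) * (C ^ 2 * ‖q‖ ^ (k * (k + 1) / 2)) :=
            mul_le_mul (hSb k) (hcb k) (norm_nonneg _) (by positivity)
        _ = _ := by ring) h0
  have hle : nhdsWithin t₀ {t : ℂ | t ≠ 0 ∧ ∀ m : ℤ, t ≠ q ^ m} ≤ 𝓝[≠] t₀ :=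
    nhdsWithin_mono _ fun t ht => ht.2 n
  have hlog := (G01.logDeriv_limit hq0 hq1 n).mono_left hle
  have hl1' := hl1.mono_left (nhdsWithin_le_nhds (s := {t : ℂ | t ≠ 0 ∧ ∀ m : ℤ, t ≠ q ^ m}))
  have hl2' := hl2.mono_left (nhdsWithin_le_nhds (s := {t : ℂ | t ≠ 0 ∧ ∀ m : ℤ, t ≠ q ^ m}))
  have hid : Tendsto (fun t : ℂ => t) (nhdsWithin t₀ {t : ℂ | t ≠ 0 ∧ ∀ m : ℤ, t ≠ q ^ m})
      (𝓝 t₀) := tendsto_id.mono_left nhdsWithin_le_nhds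
  have hfr := (hid.sub_const t₀).div hid h0
  have hall := ((hfr.mul_const (E1 q / 2 - 1 / 2)).sub hlog).mul hl1' |>.add (hfr.mul hl2')
  have hval : ((t₀ - t₀) / t₀ * (E1 q / 2 - 1 / 2) - -1) * (∑' k : ℕ, c k * t₀ ^ (-1 - (k : ℤ))) +
      (t₀ - t₀) / t₀ * (∑' k : ℕ, S k * c k * t₀ ^ (-1 - (k : ℤ))) = g00 t₀ q := by
    rw [sub_self, zero_div, zero_mul, zero_mul, zero_sub, neg_neg, one_mul, add_zero]
    rfl
  rw [hval] at hall
  refine hall.congr' ?_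
  filter_upwards [self_mem_nhdsWithin] with t ht
  have hg : g01 t q = (E1 q / 2 - 1 / 2 - jthetaD t⁻¹ q / jtheta t⁻¹ q) *
      (∑' k : ℕ, c k * t ^ (-1 - (k : ℤ))) + ∑' k : ℕ, S k * c k * t ^ (-1 - (k : ℤ)) := by
    rw [← tsum_mul_left, ← ((hs1 t ht.1).mul_left _).tsum_add (hs2 t ht.1), g01]
    refine tsum_congr fun k => ?_
    simp only [c, S]
    ring
  rw [hg]
  simp only [Pi.div_apply]
  ring
end

section
/- Let q ∈ ℂ with 0 < |q| < 1 and let r ∈ ℕ. Then (1 − s) · Σ_{k=0}^∞ s^{2k} / ((q;q)_k (q;q)_{k+r}) tends to 1/(2 (q;q)_∞²) as the real variable s tends to 1 from the left within (0,1). -/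
open Finset Filter

lemma abel_aux (a : ℕ → ℂ) (L : ℂ) (ha : Tendsto a atTop (nhds L)) :
    Tendsto (fun x : ℝ => (1 - (x : ℂ)) * ∑' k : ℕ, a k * (x : ℂ) ^ k)
      (nhdsWithin 1 (Set.Ioo (0 : ℝ) 1)) (nhds L) := by
  let f : ℕ → ℂ := fun n => Nat.casesOn n (a 0) (fun k => a (k + 1) - a k)
  have hf0 : f 0 = a 0 := rfl
  have hf : ∀ k, f (k + 1) = a (k + 1) - a k := fun k => rfl
  have hsum : ∀ n, ∑ i ∈ range (n + 1), f i = a n := by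
    intro n
    induction n with
    | zero => simp [hf0]
    | succ n ih => rw [sum_range_succ, ih, hf]; ring
  have h1 : Tendsto (fun n => ∑ i ∈ range n, f i) atTop (nhds L) := by
    rw [← tendsto_add_atTop_iff_nat 1]
    simpa only [hsum] using ha
  have h2 := Complex.tendsto_tsum_powerSeries_nhdsWithin_lt h1
  have h3 : Tendsto (fun x : ℝ => (x : ℂ)) (nhdsWithin 1 (Set.Ioo (0 : ℝ) 1))
      ((nhdsWithin 1 (Set.Iio (1 : ℝ))).map Complex.ofReal) :=
    tendsto_map.mono_left (nhdsWithin_mono _ (fun x hx => hx.2))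
  refine (h2.comp h3).congr' ?_
  filter_upwards [self_mem_nhdsWithin] with x hx
  obtain ⟨M, hM⟩ := (Metric.isBounded_range_of_tendsto a ha).exists_norm_le
  have hMa : ∀ k, ‖a k‖ ≤ M := fun k => hM _ ⟨k, rfl⟩
  have hs : Summable (fun k => a k * (x : ℂ) ^ k) := by
    refine Summable.of_norm_bounded (g := fun k => M * x ^ k)
      ((summable_geometric_of_lt_one hx.1.le hx.2).mul_left M) ?_
    intro k
    rw [norm_mul, norm_pow, Complex.norm_real, Real.norm_of_nonneg hx.1.le]
    have := pow_nonneg hx.1.le k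
    gcongr
    exact hMa k
  have hs1 := (summable_nat_add_iff 1).2 hs
  have hs2 := hs.mul_left (x : ℂ)
  have e : ∀ k, f (k + 1) * (x : ℂ) ^ (k + 1)
      = a (k + 1) * (x : ℂ) ^ (k + 1) - x * (a k * (x : ℂ) ^ k) := by
    intro k; rw [hf]; ring
  have hfs : Summable (fun k => f k * (x : ℂ) ^ k) := by
    rw [← summable_nat_add_iff 1]
    simp only [e]
    exact hs1.sub hs2
  simp only [Function.comp]
  rw [hfs.tsum_eq_zero_add]
  simp only [e]
  rw [hs1.tsum_sub hs2, tsum_mul_left, sub_mul, one_mul]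
  conv_rhs => rw [hs.tsum_eq_zero_add]
  rw [← hs.tsum_eq_zero_add, hf0, hs.tsum_eq_zero_add]
  ring

theorem aux_H_limit
    (q : ℂ) (hq0 : 0 < ‖q‖) (hq1 : ‖q‖ < 1) (r : ℕ) :
    Tendsto
      (fun s : ℝ =>
        (1 - (s : ℂ)) * ∑' k : ℕ, (s : ℂ) ^ (2 * k) / (qPoch q q k * qPoch q q (k + r)))
      (nhdsWithin 1 (Set.Ioo (0 : ℝ) 1))
      (nhds (1 / (2 * qPochInf q q ^ 2))) := by
  have hsm : Summable (fun j : ℕ => ‖-(q * q ^ j)‖) := by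
    simp only [norm_neg, norm_mul, norm_pow]
    exact (summable_geometric_of_lt_one hq0.le hq1).mul_left _
  have hP : Tendsto (fun k => qPoch q q k) atTop (nhds (qPochInf q q)) := by
    have := (multipliable_one_add_of_summable hsm).hasProd.tendsto_prod_nat
    simpa only [qPoch, qPochInf, ← sub_eq_add_neg] using this
  have hne : qPochInf q q ≠ 0 := by
    have := tprod_one_add_ne_zero_of_summable (f := fun j : ℕ => -(q * q ^ j)) ?_ hsm
    · simpa only [qPoch, qPochInf, ← sub_eq_add_neg] using this
    · intro j h
      have h' : q ^ (j + 1) = 1 := by rw [pow_succ']; linear_combination -h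
      have h2 : ‖q‖ ^ (j + 1) = 1 := by rw [← norm_pow, h', norm_one]
      exact absurd h2 (pow_lt_one₀ hq0.le hq1 (Nat.succ_ne_zero j)).ne
  have ha : Tendsto (fun k => (qPoch q q k * qPoch q q (k + r))⁻¹) atTop
      (nhds (qPochInf q q * qPochInf q q)⁻¹) :=
    (hP.mul ((tendsto_add_atTop_iff_nat r).2 hP)).inv₀ (mul_ne_zero hne hne)
  have h1 := abel_aux _ _ ha
  have h2 : Tendsto (fun s : ℝ => s ^ 2) (nhdsWithin 1 (Set.Ioo (0 : ℝ) 1))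
      (nhdsWithin 1 (Set.Ioo (0 : ℝ) 1)) := by
    refine tendsto_nhdsWithin_iff.2 ⟨?_, ?_⟩
    · have : Tendsto (fun s : ℝ => s ^ 2) (nhds 1) (nhds (1 ^ 2)) :=
        (continuous_pow 2).tendsto 1
      rw [one_pow] at this
      exact this.mono_left nhdsWithin_le_nhds
    · filter_upwards [self_mem_nhdsWithin] with s hs
      exact ⟨pow_pos hs.1 2, pow_lt_one₀ hs.1.le hs.2 two_ne_zero⟩
  have h3 : Tendsto (fun s : ℝ => (1 + (s : ℂ))⁻¹) (nhdsWithin 1 (Set.Ioo (0 : ℝ) 1))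
      (nhds (1 + ((1 : ℝ) : ℂ))⁻¹) := by
    refine Tendsto.inv₀ ?_ (by norm_num)
    exact ((continuous_const.add Complex.continuous_ofReal).tendsto 1).mono_left
      nhdsWithin_le_nhds
  have h4 := h3.mul (h1.comp h2)
  have e : (1 + ((1 : ℝ) : ℂ))⁻¹ * (qPochInf q q * qPochInf q q)⁻¹
      = 1 / (2 * qPochInf q q ^ 2) := by
    rw [← mul_inv, one_div]; norm_num [pow_two]
  rw [e] at h4
  refine h4.congr' ?_
  filter_upwards [self_mem_nhdsWithin] with s hs
  have hs1 : (1 + (s : ℂ)) ≠ 0 := by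
    have : (1 + s : ℝ) ≠ 0 := by linarith [hs.1]
    exact_mod_cast this
  simp only [Function.comp, Complex.ofReal_pow]
  have e2 : ∀ k : ℕ, (qPoch q q k * qPoch q q (k + r))⁻¹ * ((s : ℂ) ^ 2) ^ k
      = (s : ℂ) ^ (2 * k) / (qPoch q q k * qPoch q q (k + r)) := by
    intro k; rw [← pow_mul, div_eq_mul_inv, mul_comm]
  simp only [e2]
  rw [← mul_assoc]
  congr 1
  field_simp
  ring
end
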